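/- Let d ≥ 3 and let X₁,…,X_N and Y₁,…,Y_N be 2N independent random points uniformly distributed in [0,1]^d, with L_N = L_MBM(X₁,…,X_N; Y₁,…,Y_N). Then E(L_N) / N^{1−1/d} converges as N → ∞ to the constant β_MBM(d), the same limit as M(N)/N^{1−1/d} in the Poissonized model. -/

import Mathlib

open MeasureTheory ProbabilityTheory Filter

noncomputable section

/-- The unit cube `[0,1]^d` in Euclidean space `ℝ^d`. -/
def unitCube (d : ℕ) : Set (EuclideanSpace ℝ (Fin d)) :=
  {x | ∀ i, x i ∈ Set.Icc (0 : ℝ) 1}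

/-- The uniform probability measure on the unit cube `[0,1]^d`
(the cube has Lebesgue measure one, so the restriction of Lebesgue measure
to the cube is the uniform probability measure on it). -/
def unifCube (d : ℕ) : Measure (EuclideanSpace ℝ (Fin d)) :=
  volume.restrict (unitCube d)

/-- `LMBMon X Y A B` is the minimum total Euclidean length of a partial bipartite
matching pairing `min A.card B.card` of the points `X j, j ∈ A` with as many of the
points `Y j, j ∈ B`, each pair consisting of one `X`-point and one `Y`-point. -/
def LMBMon {d N₁ N₂ : ℕ} (X : Fin N₁ → EuclideanSpace ℝ (Fin d))
    (Y : Fin N₂ → EuclideanSpace ℝ (Fin d)) (A : Finset (Fin N₁)) (B : Finset (Fin N₂)) : ℝ :=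
  sInf { s | ∃ (σ : Fin (min A.card B.card) ↪ Fin N₁) (τ : Fin (min A.card B.card) ↪ Fin N₂),
    (∀ i, σ i ∈ A) ∧ (∀ i, τ i ∈ B) ∧ s = ∑ i, dist (X (σ i)) (Y (τ i)) }

/-- `LMBM X Y` : the minimum total Euclidean length of a bipartite matching between the
points of `X` and the points of `Y`; if the two families have different cardinalities
`N₁ ≠ N₂`, it is the minimum length of a partial matching pairing `min N₁ N₂` points of
each family, leaving `|N₁ - N₂|` points unmatched. -/
def LMBM {d N₁ N₂ : ℕ} (X : Fin N₁ → EuclideanSpace ℝ (Fin d))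
    (Y : Fin N₂ → EuclideanSpace ℝ (Fin d)) : ℝ :=
  LMBMon X Y Finset.univ Finset.univ

/-- `MP d lam`: the expected length of a minimum bipartite matching in the Poissonized
model on `[0,1]^d` with intensity `lam`: the numbers `n₁, n₂` of points of the two
families are independent Poisson(lam) variables and the points are i.i.d. uniform
on the cube. -/
def MP (d : ℕ) (lam : ℝ) : ℝ :=
  ∑' n₁ : ℕ, ∑' n₂ : ℕ,
    (Real.exp (-lam) * lam ^ n₁ / n₁.factorial) *
      ((Real.exp (-lam) * lam ^ n₂ / n₂.factorial) *
        ∫ p : (Fin n₁ → EuclideanSpace ℝ (Fin d)) × (Fin n₂ → EuclideanSpace ℝ (Fin d)),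
          LMBM p.1 p.2 ∂ ((Measure.pi fun _ => unifCube d).prod (Measure.pi fun _ => unifCube d)))

end

open MeasureTheory ProbabilityTheory Filter

lemma aux_rpow (d : ℕ) (hd : 3 ≤ d) (m : ℕ) :
    (((m : ℝ) ^ d) ^ (1 - 1 / (d : ℝ))) = (m : ℝ) ^ (d - 1) := by
  have hd0 : (d : ℝ) ≠ 0 := by positivity
  rw [← Real.rpow_natCast, ← Real.rpow_mul (by positivity), ← Real.rpow_natCast]
  congr 1
  rw [Nat.cast_sub (by omega)]
  field_simp
  simp

lemma aux_div {fk fq k q P S a : ℝ} (hq : 0 < q) (ha : 0 < a) (hP : 0 < P) (hfq : 0 ≤ fq)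
    (hS : 0 ≤ S) (h : fk ≤ P * fq + S) (hk : P * q ^ a ≤ k ^ a) :
    fk / k ^ a ≤ fq / q ^ a + S / (P * q ^ a) := by
  have h1 : 0 < q ^ a := by positivity
  have h2 : 0 < P * q ^ a := by positivity
  calc fk / k ^ a ≤ (P * fq + S) / k ^ a := by gcongr; exact (h2.trans_le hk).le
    _ ≤ (P * fq + S) / (P * q ^ a) := by gcongr
    _ = _ := by field_simp

set_option maxHeartbeats 2000000 in
lemma analytic_tendsto (d : ℕ) (hd : 3 ≤ d) (f : ℕ → ℝ) (C : ℝ) (hC : 0 ≤ C)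
    (h0 : ∀ n, 0 ≤ f n) (hsub : ∀ a b, f (a + b) ≤ f a + f b)
    (hrec : ∀ m N : ℕ, 1 ≤ m → 1 ≤ N →
      f (m ^ d * N) ≤ (m : ℝ) ^ (d - 1) * f N + C * (m : ℝ) ^ d * √N) :
    ∃ β : ℝ, Tendsto (fun N : ℕ => f N / (N : ℝ) ^ (1 - 1 / (d : ℝ))) atTop (nhds β) := by
  have hdR : (3 : ℝ) ≤ d := by exact_mod_cast hd
  have hinv : 1 / (d : ℝ) ≤ 1 / 3 := one_div_le_one_div_of_le (by norm_num) hdR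
  have hinv0 : 0 < 1 / (d : ℝ) := by positivity
  set α : ℝ := 1 - 1 / (d : ℝ) with hα
  set γ : ℝ := 1 / 2 - 1 / (d : ℝ) with hγ
  have hα0 : 0 < α := by linarith
  have hγ0 : 0 < γ := by linarith
  have hsq : ∀ q : ℕ, 1 ≤ q → √(q : ℝ) / (q : ℝ) ^ α = (q : ℝ) ^ (-γ) := by
    intro q hq
    have : (0 : ℝ) < q := by exact_mod_cast hq
    rw [Real.sqrt_eq_rpow, ← Real.rpow_sub this]
    congr 1
    rw [hα, hγ]; ring
  set F : ℕ → ℝ := fun N => f N / (N : ℝ) ^ α with hF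
  have hF0 : ∀ n, 0 ≤ F n := fun n => div_nonneg (h0 n) (by positivity)
  have hmono : ∀ m q k : ℕ, m ^ d * q ≤ k → (m : ℝ) ^ (d - 1) * (q : ℝ) ^ α ≤ (k : ℝ) ^ α := by
    intro m q k h
    rw [← aux_rpow d hd, ← Real.mul_rpow (by positivity) (by positivity)]
    apply Real.rpow_le_rpow (by positivity) _ hα0.le
    exact_mod_cast h
  -- the basic doubling step
  obtain ⟨C3, hC3, hstep⟩ : ∃ C3 : ℝ, 0 ≤ C3 ∧ ∀ k : ℕ, 2 ^ d ≤ k →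
      F k ≤ F (k / 2 ^ d) + C3 * ((k / 2 ^ d : ℕ) : ℝ) ^ (-γ) := by
    set K0 : ℝ := ∑ r ∈ Finset.range (2 ^ d), f r with hK0
    have hK00 : 0 ≤ K0 := Finset.sum_nonneg fun i _ => h0 i
    refine ⟨C * 2 ^ d + K0, by positivity, fun k hk => ?_⟩
    set q := k / 2 ^ d with hq
    have hq1 : 1 ≤ q := (Nat.one_le_div_iff (by positivity)).2 hk
    have hqR : (1 : ℝ) ≤ q := by exact_mod_cast hq1
    have hkq : 2 ^ d * q + k % 2 ^ d = k := Nat.div_add_mod k (2 ^ d)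
    have hfr : f (k % 2 ^ d) ≤ K0 :=
      Finset.single_le_sum (f := f) (fun i _ => h0 i)
        (Finset.mem_range.2 (Nat.mod_lt _ (by positivity)))
    have hsq1 : 1 ≤ √(q : ℝ) := Real.one_le_sqrt.2 hqR
    have h1 : f k ≤ (2 : ℕ) ^ (d - 1) * f q + (C * 2 ^ d + K0) * √q := by
      calc f k = f (2 ^ d * q + k % 2 ^ d) := by rw [hkq]
        _ ≤ _ := hsub _ _
        _ ≤ ((2 : ℕ) ^ (d - 1) * f q + C * (2 : ℕ) ^ d * √q) + K0 :=
            add_le_add (by exact_mod_cast hrec 2 q (by norm_num) hq1) hfr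
        _ ≤ _ := by push_cast; nlinarith
    have h2 := aux_div (q := q) (k := k) (a := α) (by linarith) hα0 (by positivity) (h0 q)
      (by positivity) h1 (hmono 2 q k (by omega))
    refine h2.trans ?_
    rw [hF]
    simp only
    gcongr
    rw [← hsq q hq1, ← mul_div_assoc]
    apply div_le_div_of_nonneg_left (by positivity) (by positivity)
    have : (1 : ℝ) ≤ ((2 : ℕ) : ℝ) ^ (d - 1) := one_le_pow₀ (by norm_num)
    have h3 : 0 < (q : ℝ) ^ α := by positivity
    nlinarith
  obtain ⟨C4, hC4, hH⟩ : ∃ C4 : ℝ, 0 ≤ C4 ∧ ∀ k : ℕ, 2 ^ d ≤ k →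
      F k + C4 * (k : ℝ) ^ (-γ) ≤ F (k / 2 ^ d) + C4 * ((k / 2 ^ d : ℕ) : ℝ) ^ (-γ) := by
    set ρ : ℝ := ((2 : ℝ) ^ d) ^ (-γ) with hρ
    have hρ1 : ρ < 1 := by
      apply Real.rpow_lt_one_of_one_lt_of_neg _ (by linarith)
      exact one_lt_pow₀ (by norm_num) (by omega)
    have hρ1' : 0 < 1 - ρ := by linarith
    refine ⟨C3 / (1 - ρ), by positivity, fun k hk => ?_⟩
    have h1 := hstep k hk
    set q := k / 2 ^ d with hq
    have hq1 : 1 ≤ q := (Nat.one_le_div_iff (by positivity)).2 hk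
    have hqR : (0 : ℝ) < q := by exact_mod_cast hq1
    have hkq : 2 ^ d * q + k % 2 ^ d = k := Nat.div_add_mod k (2 ^ d)
    have h2 : (k : ℝ) ^ (-γ) ≤ ρ * (q : ℝ) ^ (-γ) := by
      rw [hρ, ← Real.mul_rpow (by positivity) (by positivity)]
      apply Real.rpow_le_rpow_of_nonpos (by positivity) _ (by linarith)
      have : 2 ^ d * q ≤ k := by omega
      exact_mod_cast this
    have h3 : C3 / (1 - ρ) * (k : ℝ) ^ (-γ) ≤ C3 / (1 - ρ) * (ρ * (q : ℝ) ^ (-γ)) := by gcongr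
    have h4 : C3 / (1 - ρ) * (q : ℝ) ^ (-γ) =
        C3 / (1 - ρ) * (ρ * (q : ℝ) ^ (-γ)) + C3 * (q : ℝ) ^ (-γ) := by
      field_simp; ring
    linarith
  -- sup over k ≥ T reduces to the window
  have hwin : ∀ (T : ℕ) (B : ℝ), 1 ≤ T →
      (∀ t, T ≤ t → t < 2 ^ d * T → F t + C4 * (t : ℝ) ^ (-γ) ≤ B) →
      ∀ k, T ≤ k → F k + C4 * (k : ℝ) ^ (-γ) ≤ B := by
    intro T B hT hB k
    induction k using Nat.strong_induction_on with
    | _ k ih =>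
      intro hk
      by_cases hlt : k < 2 ^ d * T
      · exact hB k hk hlt
      · push Not at hlt
        have h2d : 1 < 2 ^ d := one_lt_pow₀ (by norm_num) (by omega)
        refine (hH k (by nlinarith)).trans (ih _ ?_ ?_)
        · exact Nat.div_lt_self (by omega) h2d
        · rw [Nat.le_div_iff_mul_le (by positivity)]; linarith
  obtain ⟨C2, hC2, hbd⟩ : ∃ C2 : ℝ, 0 ≤ C2 ∧ ∀ k : ℕ, F k ≤ C2 := by
    set B : ℝ := ∑ t ∈ Finset.range (2 ^ d * 1), (F t + C4 * (t : ℝ) ^ (-γ)) with hB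
    have hpos : ∀ t : ℕ, 0 ≤ F t + C4 * (t : ℝ) ^ (-γ) := fun t => by
      have := hF0 t; positivity
    have h1 := hwin 1 B le_rfl (fun t _ ht => Finset.single_le_sum (f := fun t : ℕ => F t + C4 * (t : ℝ) ^ (-γ)) (fun i _ => hpos i)
        (Finset.mem_range.2 ht))
    have hB0 : 0 ≤ B := Finset.sum_nonneg fun i _ => hpos i
    refine ⟨B, hB0, fun k => ?_⟩
    rcases Nat.eq_zero_or_pos k with rfl | hk
    · simp only [hF, Nat.cast_zero, Real.zero_rpow hα0.ne', div_zero]; exact hB0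
    · have := h1 k hk
      have h2 : 0 ≤ C4 * (k : ℝ) ^ (-γ) := by positivity
      linarith
  have hbd' : ∀ k : ℕ, f k ≤ C2 * (k : ℝ) ^ α + f 0 := by
    intro k
    rcases Nat.eq_zero_or_pos k with rfl | hk
    · have : 0 ≤ C2 * ((0 : ℕ) : ℝ) ^ α := by positivity
      linarith
    · have hk' : (0 : ℝ) < k := by exact_mod_cast hk
      have := hbd k
      rw [hF] at this
      simp only at this
      rw [div_le_iff₀ (by positivity)] at this
      linarith [h0 0]
  -- the fine step
  have hfine : ∀ m N t : ℕ, 1 ≤ m → 1 ≤ N → m ^ d * N ≤ t → t < (m + 1) ^ d * N →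
      F t ≤ F N + C * m * (N : ℝ) ^ (-γ) + C2 * ((1 + 1 / (m : ℝ)) ^ d - 1) ^ α + f 0 * (N : ℝ) ^ (-α) := by
    intro m N t hm hN h1 h2
    have hmR : (1 : ℝ) ≤ m := by exact_mod_cast hm
    have hNR : (1 : ℝ) ≤ N := by exact_mod_cast hN
    obtain ⟨s, rfl⟩ := Nat.exists_eq_add_of_le h1
    have hs : (s : ℝ) ≤ ((m : ℝ) ^ d * N) * ((1 + 1 / (m : ℝ)) ^ d - 1) := by
      have e : (m : ℝ) ^ d * (1 + 1 / (m : ℝ)) ^ d = ((m : ℝ) + 1) ^ d := by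
        rw [← mul_pow]; congr 1; field_simp
      have : ((m ^ d * N + s : ℕ) : ℝ) < (((m + 1) ^ d * N : ℕ) : ℝ) := by exact_mod_cast h2
      push_cast at this
      have e2 : ((m : ℝ) ^ d * N) * ((1 + 1 / (m : ℝ)) ^ d - 1) = ((m : ℝ) + 1) ^ d * N - (m : ℝ) ^ d * N := by
        rw [← e]; ring
      linarith
    have hx0 : 0 ≤ (1 + 1 / (m : ℝ)) ^ d - 1 := by
      have : 1 ≤ (1 + 1 / (m : ℝ)) ^ d := one_le_pow₀ (by simp)
      linarith
    have hsα : (s : ℝ) ^ α ≤ (m : ℝ) ^ (d - 1) * (N : ℝ) ^ α * ((1 + 1 / (m : ℝ)) ^ d - 1) ^ α := by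
      calc (s : ℝ) ^ α ≤ (((m : ℝ) ^ d * N) * ((1 + 1 / (m : ℝ)) ^ d - 1)) ^ α :=
            Real.rpow_le_rpow (by positivity) hs hα0.le
        _ = _ := by rw [Real.mul_rpow (by positivity) hx0, Real.mul_rpow (by positivity) (by positivity),
              aux_rpow d hd]
    have hmm : (m : ℝ) ^ d = m * (m : ℝ) ^ (d - 1) := by
      rw [← pow_succ']; congr 1; omega
    have hP : (1 : ℝ) ≤ (m : ℝ) ^ (d - 1) := one_le_pow₀ hmR
    have hNα : 0 < (N : ℝ) ^ α := by positivity
    have h3 : f (m ^ d * N + s) ≤ (m : ℝ) ^ (d - 1) * f N + (C * (m : ℝ) ^ d * √N +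
        (C2 * ((m : ℝ) ^ (d - 1) * (N : ℝ) ^ α * ((1 + 1 / (m : ℝ)) ^ d - 1) ^ α) +
          (m : ℝ) ^ (d - 1) * f 0)) := by
      have a1 := hsub (m ^ d * N) s
      have a2 := hrec m N hm hN
      have a3 := hbd' s
      have a4 : C2 * (s : ℝ) ^ α ≤ C2 * ((m : ℝ) ^ (d - 1) * (N : ℝ) ^ α * ((1 + 1 / (m : ℝ)) ^ d - 1) ^ α) := by
        gcongr
      have a5 : f 0 ≤ (m : ℝ) ^ (d - 1) * f 0 := by nlinarith [h0 0]
      linarith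
    have hz := h0 0
    have h4 := aux_div (q := N) (k := (m ^ d * N + s : ℕ)) (a := α) (by linarith) hα0 (by positivity) (h0 N)
      (by positivity) h3 (hmono m N _ h1)
    refine h4.trans (le_of_eq ?_)
    rw [← hsq N hN, hmm, Real.rpow_neg (by positivity)]
    simp only [hF]
    field_simp
    ring
  -- conclusion
  set ℓ := liminf F atTop with hℓ
  have hbdd1 : IsBoundedUnder (· ≥ ·) atTop F := isBoundedUnder_of ⟨0, hF0⟩
  have hbdd2 : IsBoundedUnder (· ≤ ·) atTop F := isBoundedUnder_of ⟨C2, hbd⟩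
  refine ⟨ℓ, ?_⟩
  rw [tendsto_order]
  refine ⟨fun a ha => eventually_lt_of_lt_liminf ha hbdd1, fun a ha => ?_⟩
  set ε := (a - ℓ) / 6 with hε
  have hε0 : 0 < ε := by linarith
  -- choose m0
  obtain ⟨m0, hm0, hm0'⟩ : ∃ m0 : ℕ, 1 ≤ m0 ∧ C2 * ((1 + 1 / (m0 : ℝ)) ^ d - 1) ^ α < ε := by
    have : Tendsto (fun m : ℕ => C2 * ((1 + 1 / (m : ℝ)) ^ d - 1) ^ α) atTop (nhds (C2 * ((1 + 0) ^ d - 1) ^ α)) := by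
      apply Tendsto.const_mul
      apply Tendsto.rpow_const _ (Or.inr hα0.le)
      exact ((tendsto_one_div_atTop_nhds_zero_nat.const_add 1).pow d).sub_const 1
    simp only [add_zero, one_pow, sub_self, Real.zero_rpow hα0.ne', mul_zero] at this
    exact ((eventually_ge_atTop 1).and (this.eventually_lt_const hε0)).exists
  have ht : ∀ c b : ℝ, 0 < b → ∀ᶠ N : ℕ in atTop, c * (N : ℝ) ^ (-b) < ε := by
    intro c b hb
    have : Tendsto (fun N : ℕ => c * (N : ℝ) ^ (-b)) atTop (nhds (c * 0)) :=
      ((tendsto_rpow_neg_atTop hb).comp tendsto_natCast_atTop_atTop).const_mul c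
    rw [mul_zero] at this
    exact this.eventually_lt_const hε0
  have hfreq : ∃ᶠ N in atTop, F N < ℓ + ε :=
    frequently_lt_of_liminf_lt hbdd2.isCoboundedUnder_ge (by linarith)
  obtain ⟨N, hFN, ⟨⟨hN1, hN2⟩, hN3⟩, hN4⟩ := (hfreq.and_eventually
    ((((ht (C * (2 * m0)) γ hγ0).and (ht (f 0) α hα0)).and (ht C4 γ hγ0)).and (eventually_ge_atTop 1))).exists
  have hT1 : 1 ≤ m0 ^ d * N := Nat.mul_pos (by positivity) hN4
  have hall := hwin (m0 ^ d * N) (ℓ + 5 * ε) hT1 (by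
    intro t h1 h2
    -- choose m
    have hex : ∃ j, t < (j + 1) ^ d * N ∧ True := by
      refine ⟨t, ?_, trivial⟩
      have : t < (t + 1) ^ d := lt_of_lt_of_le (Nat.lt_succ_self t) (Nat.le_self_pow (by omega) _)
      nlinarith
    obtain ⟨m, ⟨hm, -⟩, hmin⟩ := Nat.findX hex
    have hm_ge : m0 ≤ m := by
      by_contra hlt
      push Not at hlt
      have : (m + 1) ^ d ≤ m0 ^ d := Nat.pow_le_pow_left (by omega) d
      nlinarith
    have hm_le : m ^ d * N ≤ t := by
      by_contra hlt
      push Not at hlt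
      have := hmin (m - 1) (by omega)
      rw [Nat.sub_add_cancel (by omega)] at this
      exact this ⟨hlt, trivial⟩
    have hm_lt : m ≤ 2 * m0 := by
      by_contra hlt
      push Not at hlt
      have : (2 * m0) ^ d ≤ m ^ d := Nat.pow_le_pow_left (by omega) d
      rw [mul_pow] at this
      nlinarith
    have hm1 : 1 ≤ m := hm0.trans hm_ge
    have key := hfine m N t hm1 hN4 hm_le hm
    have hmR : (1 : ℝ) ≤ m := by exact_mod_cast hm1
    have hm0R : (1 : ℝ) ≤ m0 := by exact_mod_cast hm0
    have k1 : C * m * (N : ℝ) ^ (-γ) ≤ C * (2 * m0) * (N : ℝ) ^ (-γ) := by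
      have : (m : ℝ) ≤ 2 * m0 := by exact_mod_cast hm_lt
      gcongr
    have k2 : C2 * ((1 + 1 / (m : ℝ)) ^ d - 1) ^ α ≤ C2 * ((1 + 1 / (m0 : ℝ)) ^ d - 1) ^ α := by
      have : (m0 : ℝ) ≤ m := by exact_mod_cast hm_ge
      have : 1 / (m : ℝ) ≤ 1 / m0 := by gcongr
      have h5 : 1 ≤ (1 + 1 / (m : ℝ)) ^ d := one_le_pow₀ (by simp)
      have : 0 ≤ (1 + 1 / (m : ℝ)) ^ d - 1 := by linarith
      gcongr
    have k3 : C4 * (t : ℝ) ^ (-γ) ≤ C4 * (N : ℝ) ^ (-γ) := by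
      apply mul_le_mul_of_nonneg_left _ hC4
      apply Real.rpow_le_rpow_of_nonpos (by exact_mod_cast hN4) _ (by linarith)
      have : N ≤ t := by
        have : 1 ≤ m0 ^ d := Nat.one_le_pow _ _ hm0
        nlinarith
      exact_mod_cast this
    linarith)
  filter_upwards [eventually_ge_atTop (m0 ^ d * N)] with k hk
  have h1 := hall k hk
  have h2 : 0 ≤ C4 * (k : ℝ) ^ (-γ) := by positivity
  have h3 : F k < a := by linarith
  exact h3

section Combi

def IsMat {ι ι' : Type*} (M : Finset (ι × ι')) : Prop :=
  Set.InjOn Prod.fst (M : Set (ι × ι')) ∧ Set.InjOn Prod.snd (M : Set (ι × ι'))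

variable {d : ℕ}

lemma LMBM_eq {n₁ n₂ : ℕ} (X : Fin n₁ → EuclideanSpace ℝ (Fin d))
    (Y : Fin n₂ → EuclideanSpace ℝ (Fin d)) :
    LMBM X Y = sInf { s | ∃ (σ : Fin (min n₁ n₂) ↪ Fin n₁) (τ : Fin (min n₁ n₂) ↪ Fin n₂),
      s = ∑ i, dist (X (σ i)) (Y (τ i)) } := by
  have : ∀ k, k = min n₁ n₂ → sInf { s | ∃ (σ : Fin k ↪ Fin n₁) (τ : Fin k ↪ Fin n₂),
    (∀ i, σ i ∈ Finset.univ) ∧ (∀ i, τ i ∈ Finset.univ) ∧ s = ∑ i, dist (X (σ i)) (Y (τ i)) } =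
    sInf { s | ∃ (σ : Fin (min n₁ n₂) ↪ Fin n₁) (τ : Fin (min n₁ n₂) ↪ Fin n₂),
      s = ∑ i, dist (X (σ i)) (Y (τ i)) } := by
    rintro _ rfl
    simp
  exact this _ (by simp)

lemma LMBM_set {n₁ n₂ : ℕ} (X : Fin n₁ → EuclideanSpace ℝ (Fin d))
    (Y : Fin n₂ → EuclideanSpace ℝ (Fin d)) :
    { s | ∃ (σ : Fin (min n₁ n₂) ↪ Fin n₁) (τ : Fin (min n₁ n₂) ↪ Fin n₂),
      s = ∑ i, dist (X (σ i)) (Y (τ i)) } =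
    Set.range (fun p : (Fin (min n₁ n₂) ↪ Fin n₁) × (Fin (min n₁ n₂) ↪ Fin n₂) =>
      ∑ i, dist (X (p.1 i)) (Y (p.2 i))) := by
  ext s
  constructor
  · rintro ⟨σ, τ, rfl⟩; exact ⟨(σ, τ), rfl⟩
  · rintro ⟨⟨σ, τ⟩, rfl⟩; exact ⟨σ, τ, rfl⟩

instance LMBM_nonempty (n₁ n₂ : ℕ) :
    Nonempty ((Fin (min n₁ n₂) ↪ Fin n₁) × (Fin (min n₁ n₂) ↪ Fin n₂)) :=
  ⟨(Fin.castLEEmb (min_le_left _ _), Fin.castLEEmb (min_le_right _ _))⟩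

lemma LMBM_iInf {n₁ n₂ : ℕ} (X : Fin n₁ → EuclideanSpace ℝ (Fin d))
    (Y : Fin n₂ → EuclideanSpace ℝ (Fin d)) :
    LMBM X Y = ⨅ p : (Fin (min n₁ n₂) ↪ Fin n₁) × (Fin (min n₁ n₂) ↪ Fin n₂),
      ∑ i, dist (X (p.1 i)) (Y (p.2 i)) := by
  rw [LMBM_eq, LMBM_set]; rfl

lemma LMBM_le {n₁ n₂ : ℕ} (X : Fin n₁ → EuclideanSpace ℝ (Fin d))
    (Y : Fin n₂ → EuclideanSpace ℝ (Fin d))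
    (σ : Fin (min n₁ n₂) ↪ Fin n₁) (τ : Fin (min n₁ n₂) ↪ Fin n₂) :
    LMBM X Y ≤ ∑ i, dist (X (σ i)) (Y (τ i)) := by
  rw [LMBM_iInf]
  exact ciInf_le (Set.finite_range _).bddBelow (σ, τ)

lemma LMBM_nonneg {n₁ n₂ : ℕ} (X : Fin n₁ → EuclideanSpace ℝ (Fin d))
    (Y : Fin n₂ → EuclideanSpace ℝ (Fin d)) : 0 ≤ LMBM X Y := by
  rw [LMBM_iInf]
  exact le_ciInf fun p => Finset.sum_nonneg fun i _ => dist_nonneg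

lemma LMBM_bound {n₁ n₂ : ℕ} (X : Fin n₁ → EuclideanSpace ℝ (Fin d))
    (Y : Fin n₂ → EuclideanSpace ℝ (Fin d)) (D : ℝ) (hD : ∀ i j, dist (X i) (Y j) ≤ D) :
    LMBM X Y ≤ (min n₁ n₂ : ℕ) * D := by
  obtain ⟨p⟩ := LMBM_nonempty n₁ n₂
  refine (LMBM_le X Y p.1 p.2).trans ?_
  refine (Finset.sum_le_sum fun i _ => hD _ _).trans ?_
  simp

lemma LMBM_attain {n₁ n₂ : ℕ} (X : Fin n₁ → EuclideanSpace ℝ (Fin d))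
    (Y : Fin n₂ → EuclideanSpace ℝ (Fin d)) :
    ∃ M : Finset (Fin n₁ × Fin n₂), IsMat M ∧ M.card = min n₁ n₂ ∧
      ∑ e ∈ M, dist (X e.1) (Y e.2) = LMBM X Y := by
  obtain ⟨p, hp⟩ := exists_eq_ciInf_of_finite
    (f := fun p : (Fin (min n₁ n₂) ↪ Fin n₁) × (Fin (min n₁ n₂) ↪ Fin n₂) =>
      ∑ i, dist (X (p.1 i)) (Y (p.2 i)))
  rw [← LMBM_iInf] at hp
  have hinj : Function.Injective (fun i => (p.1 i, p.2 i)) := fun i j h => by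
    simpa using congrArg Prod.fst h
  refine ⟨Finset.univ.map ⟨fun i => (p.1 i, p.2 i), hinj⟩, ⟨?_, ?_⟩, by simp, ?_⟩
  · intro e he e' he' h
    simp only [Finset.coe_map, Set.mem_image, Function.Embedding.coeFn_mk] at he he'
    obtain ⟨i, -, rfl⟩ := he
    obtain ⟨j, -, rfl⟩ := he'
    have : i = j := p.1.injective h
    rw [this]
  · intro e he e' he' h
    simp only [Finset.coe_map, Set.mem_image, Function.Embedding.coeFn_mk] at he he'
    obtain ⟨i, -, rfl⟩ := he
    obtain ⟨j, -, rfl⟩ := he'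
    have : i = j := p.2.injective h
    rw [this]
  · rw [Finset.sum_map]; exact hp

lemma IsMat.insert {ι ι' : Type*} [DecidableEq ι] [DecidableEq ι'] {M : Finset (ι × ι')}
    (h : IsMat M) {i : ι} {j : ι'} (hi : i ∉ M.image Prod.fst) (hj : j ∉ M.image Prod.snd) :
    IsMat (insert (i, j) M) := by
  have hn : (i, j) ∉ (M : Set (ι × ι')) := fun hm => hi (Finset.mem_image_of_mem Prod.fst hm)
  refine ⟨?_, ?_⟩
  · rw [Finset.coe_insert, Set.injOn_insert hn]
    refine ⟨h.1, ?_⟩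
    simpa using hi
  · rw [Finset.coe_insert, Set.injOn_insert hn]
    refine ⟨h.2, ?_⟩
    simpa using hj

lemma LMBM_ext {n₁ n₂ : ℕ} (X : Fin n₁ → EuclideanSpace ℝ (Fin d))
    (Y : Fin n₂ → EuclideanSpace ℝ (Fin d)) (D : ℝ) (hD : ∀ i j, dist (X i) (Y j) ≤ D) :
    ∀ (k : ℕ) (M : Finset (Fin n₁ × Fin n₂)), IsMat M → M.card + k = min n₁ n₂ →
      LMBM X Y ≤ ∑ e ∈ M, dist (X e.1) (Y e.2) + D * k := by
  intro k
  induction k with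
  | zero =>
    intro M hM hk
    have e : Fin (min n₁ n₂) ≃ M := (finCongr (by simpa using hk.symm)).trans M.equivFin.symm
    have h := LMBM_le X Y ⟨fun i => (e i).1.1, fun i j h => e.injective (Subtype.ext
        (hM.1 (e i).2 (e j).2 h))⟩ ⟨fun i => (e i).1.2, fun i j h => e.injective (Subtype.ext
        (hM.2 (e i).2 (e j).2 h))⟩
    refine h.trans (le_of_eq ?_)
    simp only [Nat.cast_zero, mul_zero, add_zero]
    rw [← Finset.sum_coe_sort M]
    exact Fintype.sum_equiv e _ _ (fun i => rfl)
  | succ k ih =>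
    intro M hM hk
    have c1 : (M.image Prod.fst).card = M.card := Finset.card_image_of_injOn hM.1
    have c2 : (M.image Prod.snd).card = M.card := Finset.card_image_of_injOn hM.2
    obtain ⟨i, hi⟩ : ∃ i, i ∉ M.image Prod.fst := by
      by_contra h; push Not at h
      have := Finset.eq_univ_iff_forall.2 h
      rw [this, Finset.card_univ, Fintype.card_fin] at c1
      omega
    obtain ⟨j, hj⟩ : ∃ j, j ∉ M.image Prod.snd := by
      by_contra h; push Not at h
      have := Finset.eq_univ_iff_forall.2 h
      rw [this, Finset.card_univ, Fintype.card_fin] at c2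
      omega
    have hn : (i, j) ∉ M := fun hm => hi (Finset.mem_image_of_mem Prod.fst hm)
    have h := ih (insert (i, j) M) (hM.insert hi hj) (by rw [Finset.card_insert_of_notMem hn]; omega)
    rw [Finset.sum_insert hn] at h
    have := hD i j
    push_cast
    simp only at h
    linarith

lemma IsMat.card_le {n₁ n₂ : ℕ} {M : Finset (Fin n₁ × Fin n₂)} (hM : IsMat M) :
    M.card ≤ min n₁ n₂ := by
  classical
  have c1 : (M.image Prod.fst).card = M.card := Finset.card_image_of_injOn hM.1
  have c2 : (M.image Prod.snd).card = M.card := Finset.card_image_of_injOn hM.2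
  have h1 := Finset.card_le_univ (M.image Prod.fst)
  have h2 := Finset.card_le_univ (M.image Prod.snd)
  rw [Fintype.card_fin] at h1 h2
  omega

variable {ι ι' : Type*}

lemma LMBM_attain_emb (x : ι → EuclideanSpace ℝ (Fin d)) (y : ι' → EuclideanSpace ℝ (Fin d))
    {n₁ n₂ : ℕ} (a : Fin n₁ ↪ ι) (b : Fin n₂ ↪ ι') :
    ∃ M : Finset (ι × ι'), IsMat M ∧ (∀ e ∈ M, e.1 ∈ Set.range a ∧ e.2 ∈ Set.range b) ∧
      M.card = min n₁ n₂ ∧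
      ∑ e ∈ M, dist (x e.1) (y e.2) = LMBM (fun i => x (a i)) (fun j => y (b j)) := by
  obtain ⟨M, hM, hc, hs⟩ := LMBM_attain (fun i => x (a i)) (fun j => y (b j))
  refine ⟨M.map (a.prodMap b), ⟨?_, ?_⟩, ?_, by simpa using hc, ?_⟩
  · intro e he e' he' h
    simp only [Finset.coe_map, Set.mem_image] at he he'
    obtain ⟨u, hu, rfl⟩ := he
    obtain ⟨v, hv, rfl⟩ := he'
    rw [hM.1 hu hv (a.injective h)]
  · intro e he e' he' h
    simp only [Finset.coe_map, Set.mem_image] at he he'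
    obtain ⟨u, hu, rfl⟩ := he
    obtain ⟨v, hv, rfl⟩ := he'
    rw [hM.2 hu hv (b.injective h)]
  · intro e he
    simp only [Finset.mem_map] at he
    obtain ⟨u, hu, rfl⟩ := he
    exact ⟨⟨u.1, rfl⟩, ⟨u.2, rfl⟩⟩
  · rw [Finset.sum_map, ← hs]; rfl

lemma LMBM_ext_emb (x : ι → EuclideanSpace ℝ (Fin d)) (y : ι' → EuclideanSpace ℝ (Fin d))
    {n₁ n₂ : ℕ} (a : Fin n₁ ↪ ι) (b : Fin n₂ ↪ ι') (D : ℝ) (hD : ∀ i j, dist (x i) (y j) ≤ D)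
    (M : Finset (ι × ι')) (hM : IsMat M)
    (hr : ∀ e ∈ M, e.1 ∈ Set.range a ∧ e.2 ∈ Set.range b) :
    M.card ≤ min n₁ n₂ ∧ LMBM (fun i => x (a i)) (fun j => y (b j)) ≤
      ∑ e ∈ M, dist (x e.1) (y e.2) + D * ((min n₁ n₂ : ℕ) - (M.card : ℝ)) := by
  classical
  have hinj := (a.prodMap b).injective
  obtain ⟨M', rfl⟩ : ∃ M' : Finset (Fin n₁ × Fin n₂), M'.map (a.prodMap b) = M := by
    refine ⟨M.preimage (a.prodMap b) hinj.injOn, ?_⟩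
    ext e
    simp only [Finset.mem_map, Finset.mem_preimage]
    constructor
    · rintro ⟨u, hu, rfl⟩; exact hu
    · intro he
      obtain ⟨⟨i, hi⟩, ⟨j, hj⟩⟩ := hr e he
      have : (a.prodMap b) (i, j) = e := Prod.ext hi hj
      exact ⟨(i, j), by rw [this]; exact he, this⟩
  have hM' : IsMat M' := by
    constructor
    · intro u hu v hv h
      apply hinj
      apply hM.1 (Finset.mem_map_of_mem _ hu) (Finset.mem_map_of_mem _ hv)
      exact congrArg a h
    · intro u hu v hv h
      apply hinj
      apply hM.2 (Finset.mem_map_of_mem _ hu) (Finset.mem_map_of_mem _ hv)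
      exact congrArg b h
  rw [Finset.card_map, Finset.sum_map]
  have hle := hM'.card_le
  refine ⟨hle, ?_⟩
  have := LMBM_ext (fun i => x (a i)) (fun j => y (b j)) D (fun i j => hD _ _)
    (min n₁ n₂ - M'.card) M' hM' (by omega)
  rw [Nat.cast_sub hle] at this
  exact this

lemma IsMat.filter_card [DecidableEq ι] [DecidableEq ι'] {M : Finset (ι × ι')} (hM : IsMat M)
    (A A' : Finset ι) (B B' : Finset ι') (h : ∀ e ∈ M, e.1 ∈ A' ∧ e.2 ∈ B') :
    M.card ≤ (M.filter (fun e => e.1 ∈ A ∧ e.2 ∈ B)).card + ((A' \ A).card + (B' \ B).card) := by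
  have h1 : (M.filter (fun e => e.1 ∉ A)).card ≤ (A' \ A).card := by
    apply Finset.card_le_card_of_injOn Prod.fst
    · intro e he
      simp only [Finset.coe_filter, Set.mem_ofPred_eq] at he
      simp [(h e he.1).1, he.2]
    · exact hM.1.mono (Finset.coe_subset.2 (Finset.filter_subset _ _))
  have h2 : (M.filter (fun e => e.2 ∉ B)).card ≤ (B' \ B).card := by
    apply Finset.card_le_card_of_injOn Prod.snd
    · intro e he
      simp only [Finset.coe_filter, Set.mem_ofPred_eq] at he
      simp [(h e he.1).2, he.2]
    · exact hM.2.mono (Finset.coe_subset.2 (Finset.filter_subset _ _))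
  have h3 : M ⊆ (M.filter (fun e => e.1 ∈ A ∧ e.2 ∈ B)) ∪
      ((M.filter (fun e => e.1 ∉ A)) ∪ (M.filter (fun e => e.2 ∉ B))) := by
    intro e he
    simp only [Finset.mem_union, Finset.mem_filter, he, true_and]
    tauto
  have h4 := Finset.card_le_card h3
  have h5 := Finset.card_union_le (M.filter (fun e => e.1 ∈ A ∧ e.2 ∈ B))
      ((M.filter (fun e => e.1 ∉ A)) ∪ (M.filter (fun e => e.2 ∉ B)))
  have h6 := Finset.card_union_le (M.filter (fun e => e.1 ∉ A)) (M.filter (fun e => e.2 ∉ B))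
  omega

lemma IsMat.filter {M : Finset (ι × ι')} (hM : IsMat M) (p : ι × ι' → Prop) [DecidablePred p] :
    IsMat (M.filter p) :=
  ⟨hM.1.mono (Finset.coe_subset.2 (Finset.filter_subset _ _)), hM.2.mono (Finset.coe_subset.2 (Finset.filter_subset _ _))⟩

/-- comparison for different numbers of points -/
lemma LMBM_compare (x y : ℕ → EuclideanSpace ℝ (Fin d)) (D : ℝ) (hD : ∀ i j, dist (x i) (y j) ≤ D)
    (n₁ n₂ n₁' n₂' : ℕ) :
    LMBM (fun i : Fin n₁' => x i) (fun j : Fin n₂' => y j) ≤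
      LMBM (fun i : Fin n₁ => x i) (fun j : Fin n₂ => y j) +
        D * (|(n₁ : ℝ) - n₁'| + |(n₂ : ℝ) - n₂'|) := by
  have hD0 : 0 ≤ D := dist_nonneg.trans (hD 0 0)
  obtain ⟨M, hM, hr, hc, hs⟩ := LMBM_attain_emb x y (Fin.valEmbedding (n := n₁)) (Fin.valEmbedding (n := n₂))
  have hf := hM.filter_card (Finset.range n₁') (Finset.range n₁) (Finset.range n₂') (Finset.range n₂)
    (by intro e he; simpa using hr e he)
  obtain ⟨h1, h2⟩ := LMBM_ext_emb x y (Fin.valEmbedding (n := n₁')) (Fin.valEmbedding (n := n₂')) D hD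
    (M.filter (fun e => e.1 ∈ Finset.range n₁' ∧ e.2 ∈ Finset.range n₂')) (hM.filter _)
    (by intro e he; simpa using (Finset.mem_filter.1 he).2)
  set M' := M.filter (fun e => e.1 ∈ Finset.range n₁' ∧ e.2 ∈ Finset.range n₂') with hM'
  have e1 : ∑ e ∈ M', dist (x e.1) (y e.2) ≤ ∑ e ∈ M, dist (x e.1) (y e.2) :=
    Finset.sum_le_sum_of_subset_of_nonneg (Finset.filter_subset _ _) (fun _ _ _ => dist_nonneg)
  have r1 : ∀ a b : ℕ, (Finset.range a \ Finset.range b).card = a - b := by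
    intro a b
    have : Finset.range a \ Finset.range b = Finset.Ico b a := by ext; simp; omega
    rw [this, Nat.card_Ico]
  rw [r1, r1, hc] at hf
  have key : ((min n₁' n₂' : ℕ) : ℝ) - M'.card ≤ |(n₁ : ℝ) - n₁'| + |(n₂ : ℝ) - n₂'| := by
    have : ((min n₁' n₂' : ℕ) : ℤ) - M'.card ≤ |(n₁ : ℤ) - n₁'| + |(n₂ : ℤ) - n₂'| := by
      rcases abs_cases ((n₁ : ℤ) - n₁') with ⟨h, _⟩ | ⟨h, _⟩ <;>
      rcases abs_cases ((n₂ : ℤ) - n₂') with ⟨h', _⟩ | ⟨h', _⟩ <;> rw [h, h'] <;> omega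
    exact_mod_cast this
  have k2 := mul_le_mul_of_nonneg_left key hD0
  simp only [Fin.valEmbedding_apply] at h2 hs
  linarith

lemma LMBM_subadd (x y : ℕ → EuclideanSpace ℝ (Fin d)) (D : ℝ) (hD : ∀ i j, dist (x i) (y j) ≤ D)
    (s t : ℕ) :
    LMBM (fun i : Fin (s + t) => x i) (fun j : Fin (s + t) => y j) ≤
      LMBM (fun i : Fin s => x i) (fun j : Fin s => y j) +
      LMBM (fun i : Fin t => x (i + s)) (fun j : Fin t => y (j + s)) := by
  obtain ⟨M, hM, hr, hc, hs⟩ := LMBM_attain_emb x y (Fin.valEmbedding (n := s)) (Fin.valEmbedding (n := s))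
  let c : Fin t ↪ ℕ := (Fin.valEmbedding (n := t)).trans (addRightEmbedding s)
  obtain ⟨M', hM', hr', hc', hs'⟩ := LMBM_attain_emb x y c c
  have g1 : ∀ e ∈ M, e.1 < s ∧ e.2 < s := by intro e he; simpa using hr e he
  have g2 : ∀ e ∈ M', (s ≤ e.1 ∧ e.1 < s + t) ∧ (s ≤ e.2 ∧ e.2 < s + t) := by
    intro e he
    obtain ⟨⟨i, hi⟩, ⟨j, hj⟩⟩ := hr' e he
    simp only [c, Function.Embedding.trans_apply, Fin.valEmbedding_apply, addRightEmbedding_apply] at hi hj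
    omega
  have hdis : Disjoint M M' := by
    rw [Finset.disjoint_left]
    intro e he he'
    have := g1 e he; have := g2 e he'; omega
  have hU : IsMat (M ∪ M') := by
    constructor
    · intro e he e' he' h
      rw [Finset.mem_coe, Finset.mem_union] at he he'
      rcases he with he | he <;> rcases he' with he' | he'
      · exact hM.1 he he' h
      · have := g1 e he; have := g2 e' he'; omega
      · have := g1 e' he'; have := g2 e he; omega
      · exact hM'.1 he he' h
    · intro e he e' he' h
      rw [Finset.mem_coe, Finset.mem_union] at he he'
      rcases he with he | he <;> rcases he' with he' | he'
      · exact hM.2 he he' h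
      · have := g1 e he; have := g2 e' he'; omega
      · have := g1 e' he'; have := g2 e he; omega
      · exact hM'.2 he he' h
  obtain ⟨h1, h2⟩ := LMBM_ext_emb x y (Fin.valEmbedding (n := s + t)) (Fin.valEmbedding (n := s + t)) D hD
    (M ∪ M') hU (by
      intro e he
      rw [Finset.mem_union] at he
      have : e.1 < s + t ∧ e.2 < s + t := by
        rcases he with he | he
        · have := g1 e he; omega
        · have := g2 e he; omega
      simpa using this)
  rw [Finset.card_union_of_disjoint hdis, Finset.sum_union hdis, hc, hc', hs, hs'] at h2
  simp only [min_self, Nat.cast_add, sub_self, mul_zero, add_zero] at h2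
  exact h2

lemma LMBM_block {κ : Type*} [Fintype κ] [DecidableEq κ] {n N : ℕ} (hn : n = Fintype.card κ * N)
    (K K' : Fin n → κ) (x y v w : Fin n → EuclideanSpace ℝ (Fin d)) (D r : ℝ)
    (hD : ∀ i j, dist (x i) (y j) ≤ D) (hD0 : 0 ≤ D) (hr0 : 0 ≤ r)
    (hr : ∀ l l', K l = K' l' → dist (x l) (y l') ≤ r * dist (v l) (w l'))
    (A' B' : κ → Finset (Fin n)) (hA : ∀ i, (A' i).card = N) (hB : ∀ i, (B' i).card = N) :
    LMBM x y ≤ r * ∑ i, LMBM (fun j => v ((A' i).orderEmbOfFin (hA i) j))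
        (fun j => w ((B' i).orderEmbOfFin (hB i) j)) +
      D * ∑ i, (((A' i \ Finset.univ.filter (fun l => K l = i)).card : ℝ) +
        ((B' i \ Finset.univ.filter (fun l => K' l = i)).card : ℝ)) := by
  choose M hM hMr hMc hMs using fun i => LMBM_attain_emb v w
    ((A' i).orderEmbOfFin (hA i)).toEmbedding ((B' i).orderEmbOfFin (hB i)).toEmbedding
  have hMr' : ∀ i, ∀ e ∈ M i, e.1 ∈ A' i ∧ e.2 ∈ B' i := by
    intro i e he
    simpa using hMr i e he
  set A : κ → Finset (Fin n) := fun i => Finset.univ.filter (fun l => K l = i) with hAdef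
  set B : κ → Finset (Fin n) := fun i => Finset.univ.filter (fun l => K' l = i) with hBdef
  set G : κ → Finset (Fin n × Fin n) := fun i => (M i).filter (fun e => e.1 ∈ A i ∧ e.2 ∈ B i) with hG
  have hGm : ∀ i e, e ∈ G i → e ∈ M i ∧ K e.1 = i ∧ K' e.2 = i := by
    intro i e he
    simpa [hG, hAdef, hBdef] using he
  have hGc : ∀ i, N ≤ (G i).card + ((A' i \ A i).card + (B' i \ B i).card) := by
    intro i
    have := (hM i).filter_card (A i) (A' i) (B i) (B' i) (hMr' i)
    rw [hMc i, min_self] at this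
    exact this
  have hdis : ∀ i ∈ Finset.univ, ∀ j ∈ Finset.univ, i ≠ j → Disjoint (G i) (G j) := by
    intro i _ j _ hij
    rw [Finset.disjoint_left]
    intro e he he'
    exact hij ((hGm i e he).2.1.symm.trans (hGm j e he').2.1)
  set U := Finset.univ.biUnion G with hU
  have hUm : IsMat U := by
    constructor
    · intro e he e' he' h
      simp only [hU, Finset.coe_biUnion, Set.mem_iUnion, Finset.mem_coe] at he he'
      obtain ⟨i, _, he⟩ := he
      obtain ⟨j, _, he'⟩ := he'
      have h1 := hGm _ _ he
      have h2 := hGm _ _ he'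
      have : i = j := by rw [← h1.2.1, ← h2.2.1, h]
      subst this
      exact (hM i).1 h1.1 h2.1 h
    · intro e he e' he' h
      simp only [hU, Finset.coe_biUnion, Set.mem_iUnion, Finset.mem_coe] at he he'
      obtain ⟨i, _, he⟩ := he
      obtain ⟨j, _, he'⟩ := he'
      have h1 := hGm _ _ he
      have h2 := hGm _ _ he'
      have : i = j := by rw [← h1.2.2, ← h2.2.2, h]
      subst this
      exact (hM i).2 h1.1 h2.1 h
  obtain ⟨h1, h2⟩ := LMBM_ext_emb x y (Function.Embedding.refl _) (Function.Embedding.refl _) D hD U hUm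
    (by intro e he; simp)
  rw [hU, Finset.card_biUnion hdis, Finset.sum_biUnion hdis] at h2
  have c1 : ∑ i, ∑ e ∈ G i, dist (x e.1) (y e.2) ≤
      r * ∑ i, LMBM (fun j => v ((A' i).orderEmbOfFin (hA i) j))
        (fun j => w ((B' i).orderEmbOfFin (hB i) j)) := by
    rw [Finset.mul_sum]
    apply Finset.sum_le_sum
    intro i _
    calc ∑ e ∈ G i, dist (x e.1) (y e.2) ≤ ∑ e ∈ G i, r * dist (v e.1) (w e.2) := by
          apply Finset.sum_le_sum
          intro e he
          have := hGm i e he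
          exact hr _ _ (this.2.1.trans this.2.2.symm)
      _ ≤ ∑ e ∈ M i, r * dist (v e.1) (w e.2) :=
          Finset.sum_le_sum_of_subset_of_nonneg (Finset.filter_subset _ _)
            (fun _ _ _ => mul_nonneg hr0 dist_nonneg)
      _ = r * ∑ e ∈ M i, dist (v e.1) (w e.2) := by rw [Finset.mul_sum]
      _ = _ := by rw [hMs i]; rfl
  have c2 : ((min n n : ℕ) : ℝ) - ((∑ i, (G i).card : ℕ) : ℝ) ≤
      ∑ i, (((A' i \ A i).card : ℝ) + ((B' i \ B i).card : ℝ)) := by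
    have : n ≤ ∑ i, (G i).card + ∑ i, ((A' i \ A i).card + (B' i \ B i).card) := by
      rw [← Finset.sum_add_distrib]
      calc n = ∑ i : κ, N := by rw [hn]; simp
        _ ≤ _ := Finset.sum_le_sum fun i _ => hGc i
    have h : ((n : ℕ) : ℝ) ≤ ((∑ i, (G i).card + ∑ i, ((A' i \ A i).card + (B' i \ B i).card) : ℕ) : ℝ) := by
      exact_mod_cast this
    rw [min_self]
    push_cast at h ⊢
    linarith
  have c3 := mul_le_mul_of_nonneg_left c2 hD0
  simp only [Function.Embedding.refl_apply] at h2
  linarith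

lemma exists_near {n N : ℕ} (A : Finset (Fin n)) (hN : N ≤ n) :
    ∃ A' : Finset (Fin n), A'.card = N ∧ ((A' \ A).card : ℝ) ≤ |(A.card : ℝ) - N| := by
  rcases le_total N A.card with h | h
  · obtain ⟨A', hs, hc⟩ := Finset.exists_subset_card_eq h
    refine ⟨A', hc, ?_⟩
    rw [Finset.sdiff_eq_empty_iff_subset.2 hs]
    simp
  · obtain ⟨A', hs, -, hc⟩ := Finset.exists_subsuperset_card_eq (Finset.subset_univ A) h (by simpa using hN)
    refine ⟨A', hc, ?_⟩
    rw [Finset.card_sdiff_of_subset hs, hc, Nat.cast_sub h, abs_sub_comm]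
    exact le_abs_self _

end Combi

section Meas

open scoped ENNReal

variable {d : ℕ}

def cubeIco (d : ℕ) : Set (EuclideanSpace ℝ (Fin d)) := {x | ∀ i, x i ∈ Set.Ico (0 : ℝ) 1}

lemma measurableSet_unitCube (d : ℕ) : MeasurableSet (unitCube d) := by
  have : unitCube d = ⋂ i, (fun x : EuclideanSpace ℝ (Fin d) => x i) ⁻¹' Set.Icc 0 1 := by
    ext x; simp [unitCube]
  rw [this]
  exact MeasurableSet.iInter fun i => measurableSet_Icc.preimage (by fun_prop)

lemma measurableSet_cubeIco (d : ℕ) : MeasurableSet (cubeIco d) := by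
  have : cubeIco d = ⋂ i, (fun x : EuclideanSpace ℝ (Fin d) => x i) ⁻¹' Set.Ico 0 1 := by
    ext x; simp [cubeIco]
  rw [this]
  exact MeasurableSet.iInter fun i => measurableSet_Ico.preimage (by fun_prop)

lemma unifCube_eq_Ico (d : ℕ) : unifCube d = volume.restrict (cubeIco d) := by
  unfold unifCube
  apply Measure.restrict_congr_set
  have h := (Measure.univ_pi_Ico_ae_eq_Icc (μ := fun _ : Fin d => (volume : Measure ℝ))
    (f := fun _ => 0) (g := fun _ => 1))
  have h2 := (PiLp.volume_preserving_ofLp (Fin d)).quasiMeasurePreserving.preimage_ae_eq h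
  have e1 : WithLp.ofLp ⁻¹' (Set.univ.pi fun _ : Fin d => Set.Ico (0:ℝ) 1) = cubeIco d := by
    ext x; simp [cubeIco]
  have e2 : WithLp.ofLp ⁻¹' (Set.Icc (fun _ : Fin d => (0:ℝ)) (fun _ => 1)) = unitCube d := by
    ext x; simp [unitCube, Pi.le_def, forall_and]
  rw [e1, e2] at h2
  exact h2.symm

instance unifCube_prob (d : ℕ) : IsProbabilityMeasure (unifCube d) := by
  constructor
  rw [unifCube, Measure.restrict_apply_univ]
  have e2 : WithLp.ofLp ⁻¹' (Set.Icc (fun _ : Fin d => (0:ℝ)) (fun _ => 1)) = unitCube d := by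
    ext x; simp [unitCube, Pi.le_def, forall_and]
  rw [← e2, (PiLp.volume_preserving_ofLp (Fin d)).measure_preimage measurableSet_Icc.nullMeasurableSet,
    Real.volume_Icc_pi]
  simp

lemma dist_cube {x y : EuclideanSpace ℝ (Fin d)} (hx : x ∈ unitCube d) (hy : y ∈ unitCube d) :
    dist x y ≤ √d := by
  rw [EuclideanSpace.dist_eq]
  apply Real.sqrt_le_sqrt
  calc ∑ i, dist (x i) (y i) ^ 2 ≤ ∑ i : Fin d, (1 : ℝ) := by
        apply Finset.sum_le_sum
        intro i _
        have h1 := hx i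
        have h2 := hy i
        rw [Real.dist_eq, sq_abs]
        nlinarith [h1.1, h1.2, h2.1, h2.2]
    _ = d := by simp

lemma ae_unitCube (d : ℕ) : ∀ᵐ x ∂(unifCube d), x ∈ unitCube d :=
  ae_restrict_mem (measurableSet_unitCube d)

lemma measurable_LMBM (n₁ n₂ : ℕ) : Measurable
    (fun p : (Fin n₁ → EuclideanSpace ℝ (Fin d)) × (Fin n₂ → EuclideanSpace ℝ (Fin d)) =>
      LMBM p.1 p.2) := by
  simp_rw [LMBM_iInf]
  apply Measurable.iInf
  intro p
  fun_prop

/-- the law of the points -/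
noncomputable def PP (d n₁ n₂ : ℕ) :
    Measure ((Fin n₁ → EuclideanSpace ℝ (Fin d)) × (Fin n₂ → EuclideanSpace ℝ (Fin d))) :=
  (Measure.pi fun _ => unifCube d).prod (Measure.pi fun _ => unifCube d)

instance (d n₁ n₂ : ℕ) : IsProbabilityMeasure (PP d n₁ n₂) := by
  unfold PP; infer_instance

/-- expected matching length -/
noncomputable def GG (d n₁ n₂ : ℕ) : ℝ := ∫ p, LMBM p.1 p.2 ∂(PP d n₁ n₂)

lemma GG_nonneg (d n₁ n₂ : ℕ) : 0 ≤ GG d n₁ n₂ :=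
  integral_nonneg fun _ => LMBM_nonneg _ _

lemma law {Ω' : Type*} [MeasurableSpace Ω'] (P : Measure Ω') [IsProbabilityMeasure P]
    {ι ι' : Type*} (Z : ι ⊕ ι' → Ω' → EuclideanSpace ℝ (Fin d)) (hm : ∀ i, Measurable (Z i))
    (hi : iIndepFun Z P) (hu : ∀ i, P.map (Z i) = unifCube d) {n₁ n₂ : ℕ}
    (a : Fin n₁ ↪ ι) (b : Fin n₂ ↪ ι') :
    MeasurePreserving (fun ω => ((fun i => Z (Sum.inl (a i)) ω), (fun j => Z (Sum.inr (b j)) ω)))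
      P (PP d n₁ n₂) := by
  have hinj : Function.Injective (Sum.map a b) := Sum.map_injective.2 ⟨a.injective, b.injective⟩
  have h1 := hi.precomp hinj
  have h2 := (iIndepFun_iff_map_fun_eq_pi_map (fun i => (hm _).aemeasurable)).1 h1
  simp only [hu] at h2
  have h3 : MeasurePreserving (fun ω (k : Fin n₁ ⊕ Fin n₂) => Z (Sum.map a b k) ω) P
      (Measure.pi fun _ => unifCube d) := ⟨measurable_pi_lambda _ fun k => hm _, h2⟩
  exact (measurePreserving_sumPiEquivProdPi (X := fun _ : Fin n₁ ⊕ Fin n₂ => EuclideanSpace ℝ (Fin d))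
    (fun _ => unifCube d)).comp h3

lemma integrable_PP (n₁ n₂ : ℕ) : Integrable (fun p => LMBM p.1 p.2) (PP d n₁ n₂) := by
  apply Integrable.of_bound (measurable_LMBM n₁ n₂).aestronglyMeasurable ((min n₁ n₂ : ℕ) * √d)
  have h1 : ∀ᵐ p ∂(PP d n₁ n₂), ∀ i, p.1 i ∈ unitCube d := by
    rw [ae_all_iff]
    intro i
    have h : MeasurePreserving (fun p : (Fin n₁ → EuclideanSpace ℝ (Fin d)) × (Fin n₂ → EuclideanSpace ℝ (Fin d)) => p.1 i) (PP d n₁ n₂) (unifCube d) :=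
      (measurePreserving_eval (fun _ : Fin n₁ => unifCube d) i).comp measurePreserving_fst
    exact h.quasiMeasurePreserving.ae (ae_unitCube d)
  have h2 : ∀ᵐ p ∂(PP d n₁ n₂), ∀ i, p.2 i ∈ unitCube d := by
    rw [ae_all_iff]
    intro i
    have h : MeasurePreserving (fun p : (Fin n₁ → EuclideanSpace ℝ (Fin d)) × (Fin n₂ → EuclideanSpace ℝ (Fin d)) => p.2 i) (PP d n₁ n₂) (unifCube d) :=
      (measurePreserving_eval (fun _ : Fin n₂ => unifCube d) i).comp measurePreserving_snd
    exact h.quasiMeasurePreserving.ae (ae_unitCube d)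
  filter_upwards [h1, h2] with p h1 h2
  rw [Real.norm_eq_abs, abs_of_nonneg (LMBM_nonneg _ _)]
  exact LMBM_bound _ _ _ fun i j => dist_cube (h1 i) (h2 j)

lemma law_integrable {Ω' : Type*} [MeasurableSpace Ω'] {P : Measure Ω'} {n₁ n₂ : ℕ}
    {T : Ω' → (Fin n₁ → EuclideanSpace ℝ (Fin d)) × (Fin n₂ → EuclideanSpace ℝ (Fin d))}
    (h : MeasurePreserving T P (PP d n₁ n₂)) : Integrable (fun ω => LMBM (T ω).1 (T ω).2) P :=
  h.integrable_comp_of_integrable (integrable_PP n₁ n₂)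

lemma law_integral {Ω' : Type*} [MeasurableSpace Ω'] {P : Measure Ω'} {n₁ n₂ : ℕ}
    {T : Ω' → (Fin n₁ → EuclideanSpace ℝ (Fin d)) × (Fin n₂ → EuclideanSpace ℝ (Fin d))}
    (h : MeasurePreserving T P (PP d n₁ n₂)) : ∫ ω, LMBM (T ω).1 (T ω).2 ∂P = GG d n₁ n₂ := by
  rw [GG, ← h.map_eq, integral_map h.measurable.aemeasurable]
  exact (measurable_LMBM n₁ n₂).aestronglyMeasurable

/-- uniform measure on a finite type -/
noncomputable def unifFin (κ : Type*) [Fintype κ] [MeasurableSpace κ] : Measure κ :=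
  ((Fintype.card κ : ℝ≥0∞))⁻¹ • Measure.count

instance (κ : Type*) [Fintype κ] [Nonempty κ] [MeasurableSpace κ] :
    IsProbabilityMeasure (unifFin κ) := by
  constructor
  rw [unifFin, Measure.smul_apply, Measure.count_univ, ENat.card_eq_coe_fintype_card, smul_eq_mul]
  simp only [ENat.toENNReal_coe]
  exact ENNReal.inv_mul_cancel (by simp) (by simp)

lemma unifFin_integral (κ : Type*) [Fintype κ] [MeasurableSpace κ] [MeasurableSingletonClass κ]
    (f : κ → ℝ) : ∫ k, f k ∂(unifFin κ) = (Fintype.card κ : ℝ)⁻¹ * ∑ k, f k := by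
  rw [unifFin, integral_smul_measure, integral_count]
  simp

/-- the subdivision maps -/
noncomputable def phi (d m : ℕ) (k : Fin d → Fin m) (v : EuclideanSpace ℝ (Fin d)) :
    EuclideanSpace ℝ (Fin d) :=
  (m : ℝ)⁻¹ • (WithLp.toLp 2 (fun i => ((k i : ℕ) : ℝ)) + v)

lemma dist_phi (m : ℕ) (k : Fin d → Fin m) (v w : EuclideanSpace ℝ (Fin d)) :
    dist (phi d m k v) (phi d m k w) = (m : ℝ)⁻¹ * dist v w := by
  unfold phi
  rw [dist_smul₀, dist_add_left]
  simp

lemma measurable_phi (m : ℕ) (k : Fin d → Fin m) : Measurable (phi d m k) := by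
  unfold phi; fun_prop

lemma measurable_phi2 (m : ℕ) :
    Measurable (fun q : (Fin d → Fin m) × EuclideanSpace ℝ (Fin d) => phi d m q.1 q.2) :=
  measurable_from_prod_countable_right fun k => measurable_phi m k

def subIco (d m : ℕ) (k : Fin d → Fin m) : Set (EuclideanSpace ℝ (Fin d)) :=
  {x | ∀ i, (m : ℝ) * x i - ((k i : ℕ) : ℝ) ∈ Set.Ico (0 : ℝ) 1}

lemma measurableSet_subIco (d m : ℕ) (k : Fin d → Fin m) : MeasurableSet (subIco d m k) := by
  have : subIco d m k = ⋂ i, (fun x : EuclideanSpace ℝ (Fin d) => (m : ℝ) * x i - ((k i : ℕ) : ℝ)) ⁻¹' Set.Ico 0 1 := by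
    ext x; simp [subIco]
  rw [this]
  exact MeasurableSet.iInter fun i => measurableSet_Ico.preimage (by fun_prop)

lemma subIco_disj (d m : ℕ) : Pairwise (Function.onFun Disjoint (subIco d m)) := by
  intro k k' hne
  rw [Function.onFun, Set.disjoint_left]
  intro x hx hx'
  apply hne
  ext i
  have h1 := hx i
  have h2 := hx' i
  simp only [Set.mem_Ico] at h1 h2
  have a1 : ((k i : ℕ) : ℝ) < ((k' i : ℕ) : ℝ) + 1 := by linarith
  have a2 : ((k' i : ℕ) : ℝ) < ((k i : ℕ) : ℝ) + 1 := by linarith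
  norm_cast at a1 a2
  omega

lemma subIco_union (d m : ℕ) (hm : 1 ≤ m) : ⋃ k, subIco d m k = cubeIco d := by
  have hmR : (0 : ℝ) < m := by exact_mod_cast hm
  ext x
  simp only [Set.mem_iUnion]
  constructor
  · rintro ⟨k, hk⟩ i
    have h := hk i
    simp only [Set.mem_Ico] at h
    have h2 : ((k i : ℕ) : ℝ) + 1 ≤ m := by exact_mod_cast (k i).2
    have h3 : (0 : ℝ) ≤ ((k i : ℕ) : ℝ) := by positivity
    constructor
    · by_contra hc; push Not at hc; nlinarith
    · by_contra hc; push Not at hc; nlinarith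
  · intro hx
    have hlt : ∀ i, ⌊(m : ℝ) * x i⌋₊ < m := by
      intro i
      have := hx i
      rw [Nat.floor_lt (mul_nonneg hmR.le this.1)]
      nlinarith [this.2]
    refine ⟨fun i => ⟨⌊(m : ℝ) * x i⌋₊, hlt i⟩, fun i => ?_⟩
    have h1 := Nat.floor_le (mul_nonneg hmR.le (hx i).1)
    have h2 := Nat.lt_floor_add_one ((m : ℝ) * x i)
    simp only [Set.mem_Ico]
    constructor <;> linarith

lemma phi_mem_subIco (m : ℕ) (hm : 1 ≤ m) (k : Fin d → Fin m) (v : EuclideanSpace ℝ (Fin d)) :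
    phi d m k v ∈ subIco d m k ↔ v ∈ cubeIco d := by
  have hmR : (m : ℝ) ≠ 0 := by positivity
  unfold subIco cubeIco phi
  simp only [Set.mem_ofPred_eq]
  apply forall_congr'
  intro i
  have e : (m : ℝ) * ((m : ℝ)⁻¹ • (WithLp.toLp 2 (fun i => ((k i : ℕ) : ℝ)) + v)) i -
      ((k i : ℕ) : ℝ) = v i := by
    simp only [PiLp.smul_apply, PiLp.add_apply, smul_eq_mul, mul_inv_cancel_left₀ hmR]
    ring
  rw [e]

lemma phi_mem_cube (m : ℕ) (hm : 1 ≤ m) (k : Fin d → Fin m) (v : EuclideanSpace ℝ (Fin d))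
    (hv : v ∈ unitCube d) : phi d m k v ∈ unitCube d := by
  have hmR : (0 : ℝ) < m := by exact_mod_cast hm
  intro i
  have h := hv i
  have h2 : ((k i : ℕ) : ℝ) + 1 ≤ m := by exact_mod_cast (k i).2
  have h3 : (0 : ℝ) ≤ ((k i : ℕ) : ℝ) := by positivity
  have e : phi d m k v i = (((k i : ℕ) : ℝ) + v i) / m := by
    simp [phi]; ring
  rw [e]
  constructor
  · have := h.1; positivity
  · rw [div_le_one hmR]; linarith [h.2]

lemma volume_phi_preimage (m : ℕ) (hm : 1 ≤ m) (k : Fin d → Fin m) (s : Set (EuclideanSpace ℝ (Fin d))) :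
    volume (phi d m k ⁻¹' s) = (m : ℝ≥0∞) ^ d * volume s := by
  have hmR : (m : ℝ)⁻¹ ≠ 0 := by positivity
  have : phi d m k ⁻¹' s = (fun v => WithLp.toLp 2 (fun i => ((k i : ℕ) : ℝ)) + v) ⁻¹'
      ((fun v => (m : ℝ)⁻¹ • v) ⁻¹' s) := rfl
  rw [this, measure_preimage_add, Measure.addHaar_preimage_smul _ hmR]
  congr 1
  rw [finrank_euclideanSpace_fin, inv_pow, inv_inv, abs_of_nonneg (by positivity),
    ENNReal.ofReal_pow (by positivity), ENNReal.ofReal_natCast]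

lemma map_phi (m : ℕ) (hm : 1 ≤ m) :
    ((unifFin (Fin d → Fin m)).prod (unifCube d)).map (fun q => phi d m q.1 q.2) = unifCube d := by
  ext s hs
  rw [Measure.map_apply (measurable_phi2 m) hs, Measure.prod_apply ((measurable_phi2 m) hs)]
  have hmE : (m : ℝ≥0∞) ≠ 0 := by simpa using (by omega : m ≠ 0)
  have h1 : ∀ k : Fin d → Fin m, unifCube d (Prod.mk k ⁻¹' ((fun q : (Fin d → Fin m) × EuclideanSpace ℝ (Fin d) => phi d m q.1 q.2) ⁻¹' s)) =
      (m : ℝ≥0∞) ^ d * volume (s ∩ subIco d m k) := by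
    intro k
    rw [unifCube_eq_Ico, Measure.restrict_apply' (measurableSet_cubeIco d), ← volume_phi_preimage m hm k]
    congr 1
    ext v
    simp [phi_mem_subIco m hm]
  simp_rw [h1]
  rw [unifFin, lintegral_smul_measure, lintegral_count, tsum_fintype, ← Finset.mul_sum,
    unifCube_eq_Ico, ← subIco_union d m hm, Measure.restrict_iUnion_apply (subIco_disj d m)
    (measurableSet_subIco d m) hs, tsum_fintype, smul_eq_mul, ← mul_assoc]
  simp only [Fintype.card_pi, Fintype.card_fin, Finset.prod_const, Finset.card_univ, Nat.cast_pow]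
  rw [ENNReal.inv_mul_cancel (pow_ne_zero _ hmE) (by finiteness), one_mul]
  exact Finset.sum_congr rfl fun k _ => (Measure.restrict_apply hs).symm

end Meas

section Rec

variable {d : ℕ}

lemma count_dev {ι κ : Type*} [Fintype ι] [Fintype κ] [Nonempty κ] [DecidableEq κ] [MeasurableSpace κ]
    [MeasurableSingletonClass κ] {n N : ℕ} (hN : 1 ≤ N) (hn : n = Fintype.card κ * N)
    (g : Fin n ↪ ι) (i : κ) :
    ∫ K : ι → κ, |((Finset.univ.filter (fun l => K (g l) = i)).card : ℝ) - N|
      ∂(Measure.pi fun _ : ι => unifFin κ) ≤ √N := by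
  classical
  set P := (Measure.pi fun _ : ι => unifFin κ) with hP
  set ind : κ → ℝ := fun k => if k = i then 1 else 0 with hind
  set W : Fin n → (ι → κ) → ℝ := fun l K => ind (K (g l)) with hW
  have hp : (0 : ℝ) < Fintype.card κ := by exact_mod_cast Fintype.card_pos
  have hNR : (0 : ℝ) < N := by exact_mod_cast hN
  have hs0 : 0 < √(N : ℝ) := Real.sqrt_pos.2 hNR
  have hint : ∀ f : (ι → κ) → ℝ, Integrable f P := fun f => Integrable.of_finite
  have hLp : ∀ l, MemLp (W l) 2 P := fun l => MemLp.of_discrete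
  have hev : ∀ f : κ → ℝ, ∀ j : ι, ∫ K, f (K j) ∂P = (Fintype.card κ : ℝ)⁻¹ * ∑ k, f k := by
    intro f j
    rw [← unifFin_integral, ← (measurePreserving_eval (fun _ : ι => unifFin κ) j).map_eq, integral_map]
    · exact (measurable_pi_apply j).aemeasurable
    · exact (measurable_of_finite f).aestronglyMeasurable
  have hindep : iIndepFun W P :=
    (iIndepFun_pi (μ := fun _ : ι => unifFin κ) (X := fun _ => ind)
      (fun _ => (measurable_of_finite ind).aemeasurable)).precomp g.injective
  have hmean : ∀ l, P[W l] = (Fintype.card κ : ℝ)⁻¹ := by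
    intro l
    have := hev ind (g l)
    simp only [hind, Finset.sum_ite_eq', Finset.mem_univ, if_true, mul_one] at this
    exact this
  have hvar1 : ∀ l, Var[W l; P] ≤ (Fintype.card κ : ℝ)⁻¹ := by
    intro l
    refine (variance_le_expectation_sq (by exact (measurable_of_finite (W l)).aestronglyMeasurable)).trans (le_of_eq ?_)
    rw [← hmean l]
    congr 1
    ext K
    simp only [hW, hind, Pi.pow_apply]
    split_ifs <;> simp
  have hvar : Var[∑ l, W l; P] ≤ N := by
    rw [IndepFun.variance_sum (fun l _ => hLp l) (fun l _ l' _ h => hindep.indepFun h)]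
    refine (Finset.sum_le_sum fun l _ => hvar1 l).trans (le_of_eq ?_)
    rw [Finset.sum_const, Finset.card_univ, Fintype.card_fin, hn, nsmul_eq_mul]
    push_cast
    field_simp
  have hS : ∀ K, ((Finset.univ.filter (fun l => K (g l) = i)).card : ℝ) = (∑ l, W l) K := by
    intro K
    simp [hW, hind]
  have hES : ∫ K, (∑ l, W l) K ∂P = (N : ℝ) := by
    simp only [Finset.sum_apply]
    rw [integral_finsetSum _ (fun l _ => hint _)]
    simp_rw [hmean]
    rw [Finset.sum_const, Finset.card_univ, Fintype.card_fin, hn, nsmul_eq_mul]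
    push_cast
    field_simp
  have hvar2 : ∫ K, ((∑ l, W l) K - N) ^ 2 ∂P ≤ N := by
    rw [variance_eq_integral (measurable_of_finite _).aemeasurable, hES] at hvar
    exact hvar
  simp_rw [hS]
  calc ∫ K, |(∑ l, W l) K - N| ∂P ≤ ∫ K, ((√N)⁻¹ / 2 * ((∑ l, W l) K - N) ^ 2 + √N / 2) ∂P := by
        apply integral_mono (hint _) (hint _)
        intro K
        have key : ∀ a : ℝ, |a| ≤ (√N)⁻¹ / 2 * a ^ 2 + √N / 2 := by
          intro a
          have h1 : 0 ≤ (√N)⁻¹ / 2 * (|a| - √N) ^ 2 := by positivity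
          have h2 : (√N)⁻¹ / 2 * (|a| - √N) ^ 2 = (√N)⁻¹ / 2 * |a| ^ 2 + √N / 2 - |a| := by
            field_simp; ring
          rw [h2, sq_abs] at h1
          linarith
        exact key _
    _ = (√N)⁻¹ / 2 * ∫ K, ((∑ l, W l) K - N) ^ 2 ∂P + √N / 2 := by
        rw [integral_add (hint _) (hint _), integral_const_mul]
        simp
    _ ≤ (√N)⁻¹ / 2 * N + √N / 2 := by gcongr
    _ = √N := by
        have : (√(N : ℝ))⁻¹ * N = √N := by
          rw [inv_mul_eq_div, Real.div_sqrt]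
        linarith

end Rec

section Rec2
variable {d : ℕ}

set_option maxHeartbeats 1000000 in
lemma GG_rec_K (m N n : ℕ) (hm : 1 ≤ m) (hNn : N ≤ n) (hn' : n = Fintype.card (Fin d → Fin m) * N)
    (K : Fin n ⊕ Fin n → (Fin d → Fin m))
    (hKint : Integrable (fun V : Fin n ⊕ Fin n → EuclideanSpace ℝ (Fin d) =>
        LMBM (fun l : Fin n => phi d m (K (Sum.inl l)) (V (Sum.inl l)))
          (fun l : Fin n => phi d m (K (Sum.inr l)) (V (Sum.inr l))))
          (Measure.pi fun _ => unifCube d)) :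
      ∫ V : Fin n ⊕ Fin n → EuclideanSpace ℝ (Fin d),
        LMBM (fun l : Fin n => phi d m (K (Sum.inl l)) (V (Sum.inl l)))
          (fun l : Fin n => phi d m (K (Sum.inr l)) (V (Sum.inr l))) ∂(Measure.pi fun _ => unifCube d) ≤
      (m : ℝ)⁻¹ * ((m : ℝ) ^ d * GG d N N) + √d * ∑ i, (
    |((Finset.univ.filter (fun l => K (Sum.inl l) = i)).card : ℝ) - N| +
    |((Finset.univ.filter (fun l => K (Sum.inr l) = i)).card : ℝ) - N|) := by
  have hVi : iIndepFun (fun (i : Fin n ⊕ Fin n) (V : Fin n ⊕ Fin n → EuclideanSpace ℝ (Fin d)) => V i)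
      (Measure.pi fun _ => unifCube d) :=
    iIndepFun_pi (μ := fun _ : Fin n ⊕ Fin n => unifCube d) (X := fun _ x => x) (fun _ => aemeasurable_id)
  set D₀ := ∑ i, (
    |((Finset.univ.filter (fun l => K (Sum.inl l) = i)).card : ℝ) - N| +
    |((Finset.univ.filter (fun l => K (Sum.inr l) = i)).card : ℝ) - N|) with hD₀
  have LV : ∀ a b : Fin N ↪ Fin n, MeasurePreserving (fun V : Fin n ⊕ Fin n → EuclideanSpace ℝ (Fin d) =>
      ((fun i => V (Sum.inl (a i))), (fun j => V (Sum.inr (b j))))) (Measure.pi fun _ : Fin n ⊕ Fin n => unifCube d) (PP d N N) :=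
    fun a b => law _ (fun (i : Fin n ⊕ Fin n) (V : Fin n ⊕ Fin n → EuclideanSpace ℝ (Fin d)) => V i)
      (fun i => measurable_pi_apply i) hVi
      (fun i => (measurePreserving_eval (fun _ : Fin n ⊕ Fin n => unifCube d) i).map_eq) a b
  have hVc : ∀ᵐ V ∂(Measure.pi fun _ : Fin n ⊕ Fin n => unifCube d), ∀ i, V i ∈ unitCube d := by
    rw [ae_all_iff]
    intro i
    exact (measurePreserving_eval (fun _ : Fin n ⊕ Fin n => unifCube d) i).quasiMeasurePreserving.ae (ae_unitCube d)
  choose A' hA hA2 using fun i : Fin d → Fin m => exists_near (Finset.univ.filter (fun l => K (Sum.inl l) = i)) hNn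
  choose B' hB hB2 using fun i : Fin d → Fin m => exists_near (Finset.univ.filter (fun l => K (Sum.inr l) = i)) hNn
  obtain ⟨a, ha⟩ : ∃ a : (Fin d → Fin m) → Fin N ↪ Fin n,
      ∀ i j, (A' i).orderEmbOfFin (hA i) j = a i j :=
    ⟨fun i => ((A' i).orderEmbOfFin (hA i)).toEmbedding, fun _ _ => rfl⟩
  obtain ⟨b, hb⟩ : ∃ b : (Fin d → Fin m) → Fin N ↪ Fin n,
      ∀ i j, (B' i).orderEmbOfFin (hB i) j = b i j :=
    ⟨fun i => ((B' i).orderEmbOfFin (hB i)).toEmbedding, fun _ _ => rfl⟩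
  have hpt : ∀ V : Fin n ⊕ Fin n → EuclideanSpace ℝ (Fin d), (∀ i, V i ∈ unitCube d) →
      LMBM (fun l : Fin n => phi d m (K (Sum.inl l)) (V (Sum.inl l)))
          (fun l : Fin n => phi d m (K (Sum.inr l)) (V (Sum.inr l))) ≤ (m : ℝ)⁻¹ * ∑ i,
        LMBM (fun j => V (Sum.inl (a i j))) (fun j => V (Sum.inr (b i j))) + √d * D₀ := by
    intro V hV
    have key := LMBM_block hn' (fun l => K (Sum.inl l)) (fun l => K (Sum.inr l))
      (fun l : Fin n => phi d m (K (Sum.inl l)) (V (Sum.inl l)))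
      (fun l : Fin n => phi d m (K (Sum.inr l)) (V (Sum.inr l)))
      (fun l => V (Sum.inl l)) (fun l => V (Sum.inr l)) (√d) (m : ℝ)⁻¹ 
      (fun l l' => dist_cube (phi_mem_cube m hm _ _ (hV _)) (phi_mem_cube m hm _ _ (hV _)))
      (by positivity) (by positivity) (by intro l l' h; rw [h, dist_phi]) A' B' hA hB
    simp only [ha, hb] at key
    refine key.trans ?_
    have h2 := Finset.sum_le_sum (s := Finset.univ) fun i _ => add_le_add (hA2 i) (hB2 i)
    rw [← hD₀] at h2
    have h3 := mul_le_mul_of_nonneg_left h2 (Real.sqrt_nonneg (d : ℝ))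
    linarith
  have hI : ∀ i, Integrable (fun V : Fin n ⊕ Fin n → EuclideanSpace ℝ (Fin d) =>
      LMBM (fun j => V (Sum.inl (a i j))) (fun j => V (Sum.inr (b i j)))) (Measure.pi fun _ : Fin n ⊕ Fin n => unifCube d) :=
    by
    intro i
    have h := law_integrable (LV (a i) (b i))
    exact h
  have hE : ∀ i, ∫ V : Fin n ⊕ Fin n → EuclideanSpace ℝ (Fin d),
      LMBM (fun j => V (Sum.inl (a i j))) (fun j => V (Sum.inr (b i j))) ∂(Measure.pi fun _ : Fin n ⊕ Fin n => unifCube d) =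
        GG d N N :=
    by
    intro i
    have h := law_integral (LV (a i) (b i))
    exact h
  calc _ ≤ ∫ V : Fin n ⊕ Fin n → EuclideanSpace ℝ (Fin d), ((m : ℝ)⁻¹ * ∑ i,
        LMBM (fun j => V (Sum.inl (a i j))) (fun j => V (Sum.inr (b i j))) + √d * D₀)
          ∂(Measure.pi fun _ : Fin n ⊕ Fin n => unifCube d) := by
        apply integral_mono_ae hKint
        · exact ((integrable_finsetSum _ fun i _ => hI i).const_mul _).add (integrable_const _)
        filter_upwards [hVc] with V hV
        exact hpt V hV
    _ = _ := by
        rw [integral_add ((integrable_finsetSum _ fun i _ => hI i).const_mul _) (integrable_const _),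
          integral_const_mul, integral_finsetSum _ (fun i _ => hI i)]
        simp_rw [hE]
        simp

set_option maxHeartbeats 2000000 in
lemma GG_rec (m N : ℕ) (hm : 1 ≤ m) (hN : 1 ≤ N) (hd : 1 ≤ d) :
    GG d (m ^ d * N) (m ^ d * N) ≤ (m : ℝ) ^ (d - 1) * GG d N N + (2 * √d) * (m : ℝ) ^ d * √N := by
  classical
  have : NeZero m := ⟨by omega⟩
  set n := m ^ d * N with hn
  set κ := (Fin d → Fin m) with hκ
  have hcard : Fintype.card κ = m ^ d := by simp [hκ]
  have hn' : n = Fintype.card κ * N := by rw [hcard]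
  have hNn : N ≤ n := by rw [hn]; exact Nat.le_mul_of_pos_left _ (by positivity)
  set ρ := unifFin κ with hρ
  set μ := unifCube d with hμ
  set ι := Fin n ⊕ Fin n with hι
  -- law of the subdivided points
  let Z : ι → (ι → κ × EuclideanSpace ℝ (Fin d)) → EuclideanSpace ℝ (Fin d) :=
    fun i ω => phi d m (ω i).1 (ω i).2
  have hZm : ∀ i, Measurable (Z i) := fun i => (measurable_phi2 m).comp (measurable_pi_apply i)
  have hZi : iIndepFun Z (Measure.pi fun _ : ι => ρ.prod μ) :=
    iIndepFun_pi (μ := fun _ : ι => ρ.prod μ)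
      (X := fun _ (q : κ × EuclideanSpace ℝ (Fin d)) => phi d m q.1 q.2)
      (fun _ => (measurable_phi2 m).aemeasurable)
  have hZu : ∀ i, (Measure.pi fun _ : ι => ρ.prod μ).map (Z i) = unifCube d := by
    intro i
    have h1 := (measurePreserving_eval (fun _ : ι => ρ.prod μ) i).map_eq
    have h2 := map_phi (d := d) m hm
    rw [← hρ, ← hμ, ← h1, Measure.map_map (measurable_phi2 m) (measurable_pi_apply i)] at h2
    exact h2
  have L1 := law _ Z hZm hZi hZu (Function.Embedding.refl (Fin n)) (Function.Embedding.refl (Fin n))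
  have L2 := (measurePreserving_arrowProdEquivProdArrow κ (EuclideanSpace ℝ (Fin d)) ι
    (fun _ => ρ) (fun _ => μ))
  have L3 := L1.comp L2.symm
  have I3 := law_integrable L3
  have E3 := law_integral L3
  rw [integral_prod _ I3] at E3
  rw [← E3]
  set dev : (ι → κ) → κ → ℝ := fun K i =>
    |((Finset.univ.filter (fun l => K (Sum.inl l) = i)).card : ℝ) - N| +
    |((Finset.univ.filter (fun l => K (Sum.inr l) = i)).card : ℝ) - N| with hdev
  have hIae := I3.prod_right_ae
  have hint : ∀ f : (ι → κ) → ℝ, Integrable f (Measure.pi fun _ : ι => ρ) := fun f => Integrable.of_finite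
  have hsum : ∫ K : ι → κ, ∑ i, dev K i ∂(Measure.pi fun _ : ι => ρ) ≤ (m : ℝ) ^ d * (2 * √N) := by
    rw [integral_finsetSum _ (fun i _ => hint _)]
    calc _ ≤ ∑ i : κ, 2 * √N := by
          apply Finset.sum_le_sum
          intro i _
          rw [hdev]
          simp only
          rw [integral_add (hint _) (hint _), two_mul]
          exact add_le_add (count_dev hN hn' Function.Embedding.inl i)
            (count_dev hN hn' Function.Embedding.inr i)
      _ = _ := by simp [hκ]
  calc _ ≤ ∫ K : ι → κ, ((m : ℝ)⁻¹ * ((m : ℝ) ^ d * GG d N N) + √d * ∑ i, dev K i)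
        ∂(Measure.pi fun _ : ι => ρ) := by
        apply integral_mono_ae I3.integral_prod_left (hint _)
        filter_upwards [hIae] with K hKi
        exact GG_rec_K m N n hm hNn hn' K hKi
    _ = (m : ℝ)⁻¹ * ((m : ℝ) ^ d * GG d N N) + √d * ∫ K : ι → κ, ∑ i, dev K i ∂(Measure.pi fun _ : ι => ρ) := by
        rw [integral_add (hint _) (hint _)]
        simp only [integral_const_mul, integral_const, probReal_univ, one_smul]
    _ ≤ (m : ℝ)⁻¹ * ((m : ℝ) ^ d * GG d N N) + √d * ((m : ℝ) ^ d * (2 * √N)) := by gcongr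
    _ = _ := by
        have hm0 : (m : ℝ) ≠ 0 := by positivity
        have : (m : ℝ) ^ d = m * (m : ℝ) ^ (d - 1) := by
          rw [← pow_succ']; congr 1; omega
        rw [this]
        field_simp

end Rec2

section Poisson

lemma hasSum_mod {f g : ℕ → ℝ} {a b : ℝ} (h : HasSum f a) (hf : ∀ n, g n = f n) (ha : b = a) :
    HasSum g b := by
  rw [ha, show g = f from funext hf]
  exact h

lemma mean_lemma (w h b : ℕ → ℝ) (c B : ℝ) (hw0 : ∀ n, 0 ≤ w n) (hw : HasSum w 1)
    (hb : ∀ n, |h n - c| ≤ b n) (hB : HasSum (fun n => w n * b n) B) :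
    |∑' n, w n * h n - c| ≤ B := by
  have h1 : Summable (fun n => w n * (h n - c)) := by
    refine Summable.of_norm_bounded hB.summable fun n => ?_
    rw [Real.norm_eq_abs, abs_mul, abs_of_nonneg (hw0 n)]
    exact mul_le_mul_of_nonneg_left (hb n) (hw0 n)
  have h2 : HasSum (fun n => w n * h n) (∑' n, w n * (h n - c) + 1 * c) := by
    refine (h1.hasSum.add (hw.mul_right c)).congr_fun ?_
    intro n
    ring
  rw [h2.tsum_eq, one_mul, add_sub_cancel_right, ← Real.norm_eq_abs]
  refine tsum_of_norm_bounded hB fun n => ?_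
  rw [Real.norm_eq_abs, abs_mul, abs_of_nonneg (hw0 n)]
  exact mul_le_mul_of_nonneg_left (hb n) (hw0 n)

/-- Poisson weights -/
noncomputable def pw (lam : ℝ) (n : ℕ) : ℝ := Real.exp (-lam) * lam ^ n / n.factorial

lemma pw_nonneg {lam : ℝ} (h : 0 ≤ lam) (n : ℕ) : 0 ≤ pw lam n := by
  unfold pw; positivity

lemma pw_hasSum (lam : ℝ) : HasSum (pw lam) 1 := by
  have h := (NormedSpace.expSeries_div_hasSum_exp (𝔸 := ℝ) lam).mul_left (Real.exp (-lam))
  rw [← Real.exp_eq_exp_ℝ, ← Real.exp_add, neg_add_cancel, Real.exp_zero] at h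
  refine hasSum_mod h (fun n => ?_) rfl
  unfold pw
  ring

lemma pw_succ (lam : ℝ) (n : ℕ) : pw lam (n + 1) * ((n : ℝ) + 1) = lam * pw lam n := by
  unfold pw
  rw [Nat.factorial_succ]
  have : (n.factorial : ℝ) ≠ 0 := by positivity
  push_cast
  field_simp
  ring

lemma pw_mean (lam : ℝ) : HasSum (fun n => pw lam n * (n : ℝ)) lam := by
  rw [← hasSum_nat_add_iff' 1]
  simp only [Finset.sum_range_one, Nat.cast_zero, mul_zero, sub_zero, Nat.cast_add, Nat.cast_one, pw_succ]
  simpa using (pw_hasSum lam).mul_left lam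

lemma pw_mean2 (lam : ℝ) : HasSum (fun n => pw lam n * ((n : ℝ) * (n - 1))) (lam ^ 2) := by
  rw [← hasSum_nat_add_iff' 1]
  simp only [Finset.sum_range_one, Nat.cast_zero, mul_zero, zero_mul, sub_zero, Nat.cast_add, Nat.cast_one,
    add_sub_cancel_right]
  rw [pow_two]
  refine hasSum_mod ((pw_mean lam).mul_left lam) (fun n => ?_) rfl
  rw [← mul_assoc, pw_succ, mul_assoc]

lemma pw_var (lam : ℝ) : HasSum (fun n => pw lam n * ((n : ℝ) - lam) ^ 2) lam := by
  have h := ((pw_mean2 lam).add ((pw_mean lam).mul_left (1 - 2 * lam))).add ((pw_hasSum lam).mul_left (lam ^ 2))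
  refine hasSum_mod h (fun n => ?_) ?_
  · ring
  · ring

/-- dominating deviation -/
noncomputable def pe (lam : ℝ) (n : ℕ) : ℝ := (√lam)⁻¹ / 2 * ((n : ℝ) - lam) ^ 2 + (√lam / 2 + 1)

lemma pe_hasSum {lam : ℝ} (h : 0 < lam) : HasSum (fun n => pw lam n * pe lam n) (√lam + 1) := by
  have h1 := ((pw_var lam).mul_left ((√lam)⁻¹ / 2)).add ((pw_hasSum lam).mul_left (√lam / 2 + 1))
  refine hasSum_mod h1 (fun n => ?_) ?_
  · unfold pe; ring
  · have : (√lam)⁻¹ * lam = √lam := by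
      rw [inv_mul_eq_div, Real.div_sqrt]
    linarith

lemma le_pe {lam : ℝ} (h : 0 < lam) (n : ℕ) : |(n : ℝ) - ⌊lam⌋₊| ≤ pe lam n := by
  have hs : 0 < √lam := Real.sqrt_pos.2 h
  have h0 : |(n : ℝ) - ⌊lam⌋₊| ≤ |(n : ℝ) - lam| + 1 := by
    have h1 := Nat.floor_le h.le
    have h2 := Nat.lt_floor_add_one lam
    have h3 : |lam - (⌊lam⌋₊ : ℝ)| ≤ 1 := by rw [abs_le]; constructor <;> linarith
    have := abs_sub_le (n : ℝ) lam ⌊lam⌋₊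
    linarith
  have key : ∀ a : ℝ, |a| ≤ (√lam)⁻¹ / 2 * a ^ 2 + √lam / 2 := by
    intro a
    have h1 : 0 ≤ (√lam)⁻¹ / 2 * (|a| - √lam) ^ 2 := by positivity
    have h2 : (√lam)⁻¹ / 2 * (|a| - √lam) ^ 2 = (√lam)⁻¹ / 2 * |a| ^ 2 + √lam / 2 - |a| := by
      field_simp; ring
    rw [h2, sq_abs] at h1
    linarith
  have := key ((n : ℝ) - lam)
  unfold pe
  linarith

lemma poisson_compare {lam : ℝ} (h : 0 < lam) (G : ℕ → ℕ → ℝ) (g D : ℝ) (hD : 0 ≤ D)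
    (hG : ∀ a b, |G a b - g| ≤ D * (|(a : ℝ) - ⌊lam⌋₊| + |(b : ℝ) - ⌊lam⌋₊|)) :
    |∑' a, ∑' b, pw lam a * (pw lam b * G a b) - g| ≤ 2 * D * (√lam + 1) := by
  have hw0 := pw_nonneg h.le
  have hw := pw_hasSum lam
  have he := pe_hasSum h
  simp_rw [tsum_mul_left]
  refine mean_lemma (pw lam) (fun a => ∑' b, pw lam b * G a b)
    (fun a => D * (pe lam a + (√lam + 1))) g _ hw0 hw ?_ ?_
  · intro a
    refine mean_lemma (pw lam) (fun b => G a b) (fun b => D * (pe lam a + pe lam b)) g _ hw0 hw ?_ ?_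
    · intro b
      refine (hG a b).trans (mul_le_mul_of_nonneg_left ?_ hD)
      exact add_le_add (le_pe h a) (le_pe h b)
    · refine hasSum_mod ((hw.mul_left (D * pe lam a)).add (he.mul_left D)) (fun n => ?_) ?_
      · ring
      · ring
  · refine hasSum_mod ((he.mul_left D).add (hw.mul_left (D * (√lam + 1)))) (fun n => ?_) ?_
    · ring
    · ring

lemma poisson_tendsto {d : ℕ} (hd : 3 ≤ d) (M : ℝ → ℝ) (f : ℕ → ℝ) (C β : ℝ)
    (hM : ∀ lam, 0 < lam → |M lam - f ⌊lam⌋₊| ≤ C * (√lam + 1))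
    (hf : Tendsto (fun N : ℕ => f N / (N : ℝ) ^ (1 - 1 / (d : ℝ))) atTop (nhds β)) :
    Tendsto (fun N : ℝ => M N / N ^ (1 - 1 / (d : ℝ))) atTop (nhds β) := by
  have hd' : (3 : ℝ) ≤ d := by exact_mod_cast hd
  set α : ℝ := 1 - 1 / (d : ℝ) with hα
  have hα2 : 1 / 2 < α := by
    have : 1 / (d : ℝ) ≤ 1 / 3 := one_div_le_one_div_of_le (by norm_num) hd'
    rw [hα]; linarith
  have hfl : Tendsto (fun N : ℝ => ⌊N⌋₊) atTop atTop := tendsto_nat_floor_atTop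
  have h1 := hf.comp hfl
  have h2 : Tendsto (fun N : ℝ => ((⌊N⌋₊ : ℝ) / N) ^ α) atTop (nhds 1) := by
    have := (tendsto_nat_floor_div_atTop (R := ℝ)).rpow_const (p := α) (Or.inl one_ne_zero)
    simpa using this
  have h3 := h1.mul h2
  rw [mul_one] at h3
  have h4 : Tendsto (fun N : ℝ => C * (N ^ (-(α - 1 / 2)) + N ^ (-α))) atTop (nhds 0) := by
    have := ((tendsto_rpow_neg_atTop (y := α - 1 / 2) (by linarith)).add
      (tendsto_rpow_neg_atTop (y := α) (by linarith))).const_mul C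
    simpa using this
  have h5 : Tendsto (fun N : ℝ => (M N - f ⌊N⌋₊) / N ^ α) atTop (nhds 0) := by
    refine squeeze_zero_norm' ?_ h4
    filter_upwards [eventually_gt_atTop 0] with x hx
    have hp : 0 < x ^ α := Real.rpow_pos_of_pos hx _
    rw [Real.norm_eq_abs, abs_div, abs_of_pos hp, div_le_iff₀ hp]
    refine (hM x hx).trans (le_of_eq ?_)
    rw [mul_assoc, add_mul, ← Real.rpow_add hx, ← Real.rpow_add hx, Real.sqrt_eq_rpow]
    rw [neg_add_cancel, Real.rpow_zero]
    congr 3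
    ring
  have h6 := h5.add h3
  rw [zero_add] at h6
  refine h6.congr' ?_
  filter_upwards [eventually_ge_atTop 1] with x hx
  have hx0 : 0 < x := by linarith
  have hn : 0 < (⌊x⌋₊ : ℝ) := by
    have := Nat.floor_pos.2 hx
    exact_mod_cast this
  simp only [Function.comp]
  rw [Real.div_rpow hn.le hx0.le]
  have hp : 0 < x ^ α := Real.rpow_pos_of_pos hx0 _
  have hq : 0 < (⌊x⌋₊ : ℝ) ^ α := Real.rpow_pos_of_pos hn _
  field_simp
  ring

end Poisson

section Assembly

variable {d : ℕ} {Ω' : Type*} [MeasurableSpace Ω'] {P : Measure Ω'} [IsProbabilityMeasure P]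
  {X Y : ℕ → Ω' → EuclideanSpace ℝ (Fin d)}

lemma ae_cube (hmeas : ∀ n, Measurable (Sum.elim X Y n))
    (hunif : ∀ n, Measure.map (Sum.elim X Y n) P = unifCube d) :
    ∀ᵐ ω ∂P, (∀ i j, dist (X i ω) (Y j ω) ≤ √d) := by
  have h : ∀ᵐ ω ∂P, ∀ n, Sum.elim X Y n ω ∈ unitCube d := by
    rw [ae_all_iff]
    intro n
    have hp : MeasurePreserving (Sum.elim X Y n) P (unifCube d) := ⟨hmeas n, hunif n⟩
    exact hp.quasiMeasurePreserving.ae (ae_unitCube d)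
  filter_upwards [h] with ω hω i j
  exact dist_cube (hω (Sum.inl i)) (hω (Sum.inr j))

lemma law_shift (hmeas : ∀ n, Measurable (Sum.elim X Y n)) (hindep : iIndepFun (Sum.elim X Y) P)
    (hunif : ∀ n, Measure.map (Sum.elim X Y n) P = unifCube d) (n₁ n₂ s : ℕ) :
    MeasurePreserving (fun ω => ((fun i : Fin n₁ => X (i + s) ω), (fun j : Fin n₂ => Y (j + s) ω)))
      P (PP d n₁ n₂) :=
  law P (Sum.elim X Y) hmeas hindep hunif (Fin.valEmbedding.trans (addRightEmbedding s))
    (Fin.valEmbedding.trans (addRightEmbedding s))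

lemma law_zero (hmeas : ∀ n, Measurable (Sum.elim X Y n)) (hindep : iIndepFun (Sum.elim X Y) P)
    (hunif : ∀ n, Measure.map (Sum.elim X Y n) P = unifCube d) (n₁ n₂ : ℕ) :
    MeasurePreserving (fun ω => ((fun i : Fin n₁ => X i ω), (fun j : Fin n₂ => Y j ω)))
      P (PP d n₁ n₂) :=
  law P (Sum.elim X Y) hmeas hindep hunif Fin.valEmbedding Fin.valEmbedding

lemma GG_subadd (hmeas : ∀ n, Measurable (Sum.elim X Y n)) (hindep : iIndepFun (Sum.elim X Y) P)
    (hunif : ∀ n, Measure.map (Sum.elim X Y n) P = unifCube d) (s t : ℕ) :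
    GG d (s + t) (s + t) ≤ GG d s s + GG d t t := by
  have L := law_zero hmeas hindep hunif
  have LS := law_shift hmeas hindep hunif t t s
  rw [← law_integral (L (s + t) (s + t)), ← law_integral (L s s), ← law_integral LS,
    ← integral_add (law_integrable (L s s)) (law_integrable LS)]
  refine integral_mono_ae (law_integrable (L (s + t) (s + t)))
    ((law_integrable (L s s)).add (law_integrable LS)) ?_
  filter_upwards [ae_cube hmeas hunif] with ω hω
  exact LMBM_subadd (fun i => X i ω) (fun i => Y i ω) (√d) hω s t

lemma GG_compare1 (hmeas : ∀ n, Measurable (Sum.elim X Y n)) (hindep : iIndepFun (Sum.elim X Y) P)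
    (hunif : ∀ n, Measure.map (Sum.elim X Y n) P = unifCube d) (n₁ n₂ n₁' n₂' : ℕ) :
    GG d n₁' n₂' ≤ GG d n₁ n₂ + √d * (|(n₁ : ℝ) - n₁'| + |(n₂ : ℝ) - n₂'|) := by
  have L := law_zero hmeas hindep hunif
  have hc : √d * (|(n₁ : ℝ) - n₁'| + |(n₂ : ℝ) - n₂'|) =
    ∫ ω, √d * (|(n₁ : ℝ) - n₁'| + |(n₂ : ℝ) - n₂'|) ∂P := by simp
  rw [hc, ← law_integral (L n₁' n₂'), ← law_integral (L n₁ n₂),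
    ← integral_add (law_integrable (L n₁ n₂)) (integrable_const _)]
  refine integral_mono_ae (law_integrable (L n₁' n₂'))
    ((law_integrable (L n₁ n₂)).add (integrable_const _)) ?_
  filter_upwards [ae_cube hmeas hunif] with ω hω
  exact LMBM_compare (fun i => X i ω) (fun i => Y i ω) (√d) hω n₁ n₂ n₁' n₂'

lemma GG_compare (hmeas : ∀ n, Measurable (Sum.elim X Y n)) (hindep : iIndepFun (Sum.elim X Y) P)
    (hunif : ∀ n, Measure.map (Sum.elim X Y n) P = unifCube d) (a b N : ℕ) :
    |GG d a b - GG d N N| ≤ √d * (|(a : ℝ) - N| + |(b : ℝ) - N|) := by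
  have h1 := GG_compare1 hmeas hindep hunif a b N N
  have h2 := GG_compare1 hmeas hindep hunif N N a b
  rw [abs_sub_comm (N : ℝ) a, abs_sub_comm (N : ℝ) b] at h2
  rw [abs_le]
  constructor <;> linarith

end Assembly

/-- For `d ≥ 3`, the mean `E(L_N)/N^{1−1/d}` for `2N` i.i.d. uniform points of `[0,1]^d`
converges as `N → ∞`, to the same constant `β_MBM(d)` as the Poissonized normalized
mean `M(N)/N^{1−1/d}`. -/
theorem EL_tendsto_beta
    (d : ℕ) (hd : 3 ≤ d)
    (Ω : Type*) [MeasureSpace Ω] [IsProbabilityMeasure (ℙ : Measure Ω)]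
    (X Y : ℕ → Ω → EuclideanSpace ℝ (Fin d))
    (hmeas : ∀ n, Measurable (Sum.elim X Y n))
    (hindep : iIndepFun (Sum.elim X Y) ℙ)
    (hunif : ∀ n, Measure.map (Sum.elim X Y n) ℙ = unifCube d) :
    ∃ β : ℝ,
      Tendsto (fun N : ℝ => MP d N / N ^ (1 - 1 / (d : ℝ))) atTop (nhds β) ∧
      Tendsto
        (fun N : ℕ =>
          (∫ ω, LMBM (fun i : Fin N => X i ω) (fun j : Fin N => Y j ω) ∂ℙ) /
            (N : ℝ) ^ (1 - 1 / (d : ℝ)))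
        atTop (nhds β) := by
  have hL := law_zero hmeas hindep hunif
  have hEL : ∀ N : ℕ, ∫ ω, LMBM (fun i : Fin N => X i ω) (fun j : Fin N => Y j ω) ∂ℙ = GG d N N := by
    intro N
    have h := law_integral (hL N N)
    exact h
  obtain ⟨β, hβ⟩ := analytic_tendsto d hd (fun n => GG d n n) (2 * √d) (by positivity)
    (fun n => GG_nonneg d n n) (fun a b => GG_subadd hmeas hindep hunif a b)
    (fun m N hm hN => GG_rec m N hm hN (by omega))
  refine ⟨β, ?_, ?_⟩
  · refine poisson_tendsto hd (MP d) (fun n => GG d n n) (2 * √d) β ?_ hβ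
    intro lam hlam
    exact poisson_compare hlam (fun a b => GG d a b) (GG d ⌊lam⌋₊ ⌊lam⌋₊) (√d) (by positivity)
      (fun a b => GG_compare hmeas hindep hunif a b _)
  · simp_rw [hEL]
    exact hβ
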